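/- arXiv:1609.04002 — 2 statements merged into one kernel-verified Lean document; each statement's English description precedes it below -/
import Mathlib

section
/- Let q := |Ω_∞| be the number of archimedean places of K. There are positive constants c_s, c_i and c_{Ω′,Ω″} such that, for all Z ≥ 1: vol D*_s(Z) = c_s·I_q(Z); vol D*_i(Z) = c_i·I_q(Z^{2/d_i}) for each index i with d_i = deg F_i ≥ 3; and vol D*_{Ω′,Ω″}(Z) = c_{Ω′,Ω″}·I_q(Z) for each subset Ω′ ⊆ Ω_∞ of real places with Ω″ := Ω_∞ ∖ Ω′. -/
/-!
At each archimedean place `v` the region is cut out by a nonnegative function `g_v` on a real vector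
space `E_v`: one of `|s|`, `‖s‖ ^ 2`, `s ^ 2 + t ^ 2`, or `|F(s, t)| ^ (m_v * (2 / d))`. Each is
homogeneous of degree `dim E_v`, so scaling gives `vol {g_v < z} = z * c_v` for `z > 0`, with
`c_v = vol {g_v < 1}`. When `c_v` is finite, this says that `g_v` pushes Haar measure forward to
`c_v` times Lebesgue measure on `[0, ∞)` (`measurePreserving_ray`). Taking the product over the
`q` places, `(g_v)_v` pushes the volume forward to `∏ c_v` times Lebesgue measure on the orthant
`[0, ∞) ^ q`, and the region is the preimage of `{y_v ≥ 1, ∏ y_v < T}`, hence has volume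
`(∏ c_v) * I_q(T)` (`volume_of_rays`). For the forms, raising `𝔑(F(s, t)) < Z` to the power `2 / d`
gives `T = Z ^ (2 / d)`.

It remains to see that `c_v` is finite and positive. Positivity holds because `{g_v < 1}` is an open
neighbourhood of `0`. Finiteness is clear except for the forms, where `{|F| < 1}` is unbounded. A
form of degree `d ≥ 3` irreducible over `K` has an irreducible, hence separable, dehomogenisation of
degree exactly `d`, so over `ℂ` it is a constant times a product of `d` pairwise non-proportional
factors `s - r t` (`exists_linear_factors`). At a point `x = (s, t)` only the smallest factor can be
small: any two distinct factors control `‖x‖` (`norm_le_of_two`). So `|F(x)| < 1` and `‖x‖ ≥ 1`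
force `|s - r t| ≪ ‖x‖ ^ (1 - d) ≤ ‖x‖ ^ (-2)` for some root `r`. Fixing `t`, this confines `s` to a
ball of radius `≪ (1 + ‖t‖) ^ (-2)`, whose volume is integrable in `t` (`slab_finite`).
-/

open NumberField NumberField.InfinitePlace MeasureTheory Classical Pointwise

noncomputable section

variable (K : Type*) [Field K] [NumberField K]

/-- `K_∞ = ∏_{v ∣ ∞} K_v`, identified with the mixed space `ℝ^{r₁} × ℂ^{r₂}`. -/
abbrev KInfty := NumberField.mixedEmbedding.mixedSpace K

/-- The embedding `O_K → K_w = ℝ` at a real place `w`. -/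
def realEmbed (w : {w : InfinitePlace K // w.IsReal}) : 𝓞 K →+* ℝ :=
  (embedding_of_isReal w.2).comp (algebraMap (𝓞 K) K)

/-- The embedding `O_K → K_w = ℂ` at a complex place `w`. -/
def complexEmbed (w : {w : InfinitePlace K // w.IsComplex}) : 𝓞 K →+* ℂ :=
  (w.1.embedding).comp (algebraMap (𝓞 K) K)

/-- Evaluation of a binary form `F` over `O_K` at the component of `(s,t) ∈ K_∞²` at a
real place `w`. -/
def realEvalForm (F : MvPolynomial (Fin 2) (𝓞 K))
    (w : {w : InfinitePlace K // w.IsReal}) (s t : ℝ) : ℝ :=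
  MvPolynomial.eval ![s, t] (F.map (realEmbed K w))

/-- Evaluation of a binary form `F` over `O_K` at the component of `(s,t) ∈ K_∞²` at a
complex place `w`. -/
def complexEvalForm (F : MvPolynomial (Fin 2) (𝓞 K))
    (w : {w : InfinitePlace K // w.IsComplex}) (s t : ℂ) : ℂ :=
  MvPolynomial.eval ![s, t] (F.map (complexEmbed K w))

/-- Componentwise evaluation `F(s,t) ∈ K_∞` of a binary form at `(s,t) ∈ K_∞²`. -/
def evalAtPlaces (F : MvPolynomial (Fin 2) (𝓞 K)) (s t : KInfty K) : KInfty K :=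
  (fun w => realEvalForm K F w (s.1 w) (t.1 w),
   fun w => complexEvalForm K F w (s.2 w) (t.2 w))

/-- The norm at infinity `𝔑(x) = ∏_{v ∣ ∞} |x_v|^{m_v}` of `x ∈ K_∞`. -/
def normInfty (x : KInfty K) : ℝ :=
  (∏ w, |x.1 w|) * ∏ w, ‖x.2 w‖ ^ 2

/-- `I_q(T)`: the volume of `{(x_1,…,x_q) ∈ ℝ^q : x_j ≥ 1 ∀ j, x_1⋯x_q < T}`. -/
def hypVol (q : ℕ) (T : ℝ) : ℝ :=
  (volume {x : Fin q → ℝ | (∀ i, 1 ≤ x i) ∧ ∏ i, x i < T}).toReal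

end

namespace HypVol
open scoped NNReal ENNReal
open Module

/-! ### Pushforward to Lebesgue measure on a half-line or an orthant -/

section rays

/-- Lebesgue measure on `[0, ∞)`, regarded as a measure on `ℝ`. -/
noncomputable def ray : Measure ℝ := volume.restrict (Set.Ici 0)

instance : SigmaFinite ray := by unfold ray; infer_instance

/-- The product over `i` of `c i` times Lebesgue measure on `[0, ∞)`. The weights are kept on the
individual factors, so that products of maps to weighted half-lines are again of this form. -/
noncomputable def rays {ι : Type*} [Fintype ι] (c : ι → ℝ≥0) : Measure (ι → ℝ) :=
  Measure.pi fun i => c i • ray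

instance {ι : Type*} [Fintype ι] (c : ι → ℝ≥0) : SigmaFinite (rays c) := by
  unfold rays; infer_instance

theorem rays_eq {ι : Type*} [Fintype ι] (c : ι → ℝ≥0) :
    rays c = (∏ i, c i) • volume.restrict (Set.univ.pi fun _ : ι => Set.Ici (0 : ℝ)) := by
  unfold rays
  refine Measure.pi_eq fun s _ => ?_
  rw [volume_pi, Measure.restrict_pi_pi, Measure.smul_apply, Measure.pi_pi]
  simp only [Measure.smul_apply, ray]
  simp only [ENNReal.smul_def, smul_eq_mul, Finset.prod_mul_distrib]
  push_cast
  rfl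

theorem measurableSet_hyp (κ : Type*) [Fintype κ] (T : ℝ) :
    MeasurableSet {y : κ → ℝ | (∀ i, 1 ≤ y i) ∧ ∏ i, y i < T} := by
  refine MeasurableSet.inter (s₁ := {y : κ → ℝ | ∀ i, 1 ≤ y i})
    (s₂ := {y : κ → ℝ | ∏ i, y i < T}) ?_ ?_
  · have : {y : κ → ℝ | ∀ i, 1 ≤ y i} = ⋂ i, {y : κ → ℝ | 1 ≤ y i} := by ext; simp
    rw [this]
    exact MeasurableSet.iInter fun i => measurableSet_le measurable_const (measurable_pi_apply i)
  · exact measurableSet_lt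
      (Finset.measurable_fun_prod _ fun i _ => measurable_pi_apply i) measurable_const

/-- If `g` pushes `μ` forward to the weighted orthant measure, the hyperbolic region cut out by `g`
has `μ`-volume `(∏ i, c i) * I_q(T)`. -/
theorem volume_of_rays {X ι : Type*} [Fintype ι] [MeasurableSpace X] {μ : Measure X}
    {c : ι → ℝ≥0} {g : X → ι → ℝ} (hg : MeasurePreserving g μ (rays c))
    {q : ℕ} (hq : Fintype.card ι = q) (T : ℝ) :
    (μ {x | (∀ i, 1 ≤ g x i) ∧ ∏ i, g x i < T}).toReal = (∏ i, (c i : ℝ)) * hypVol q T := by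
  have h1 : μ {x | (∀ i, 1 ≤ g x i) ∧ ∏ i, g x i < T}
      = rays c {y | (∀ i, 1 ≤ y i) ∧ ∏ i, y i < T} :=
    hg.measure_preimage (measurableSet_hyp ι T).nullMeasurableSet
  have hsub : {y : ι → ℝ | (∀ i, 1 ≤ y i) ∧ ∏ i, y i < T} ⊆ Set.univ.pi fun _ => Set.Ici 0 :=
    fun y hy i _ => zero_le_one.trans (show (1 : ℝ) ≤ y i from hy.1 i)
  rw [h1, rays_eq, Measure.smul_apply, Measure.restrict_apply (measurableSet_hyp ι T),
    Set.inter_eq_left.2 hsub]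
  have e : ι ≃ Fin q := Fintype.equivFinOfCardEq hq
  have h2 := (volume_measurePreserving_piCongrLeft (fun _ : Fin q => ℝ) e).measure_preimage
    (measurableSet_hyp (Fin q) T).nullMeasurableSet
  have h3 : (MeasurableEquiv.piCongrLeft (fun _ : Fin q => ℝ) e) ⁻¹'
      {y | (∀ i, 1 ≤ y i) ∧ ∏ i, y i < T} = {y | (∀ i, 1 ≤ y i) ∧ ∏ i, y i < T} := by
    ext y
    have : ∀ i, (MeasurableEquiv.piCongrLeft (fun _ : Fin q => ℝ) e) y (e i) = y i := fun i =>
      Equiv.piCongrLeft_apply_apply (fun _ : Fin q => ℝ) e y i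
    simp only [Set.mem_preimage, Set.mem_ofPred_eq, e.surjective.forall, ← Equiv.prod_comp e, this]
  rw [h3] at h2
  rw [h2, hypVol, ENNReal.smul_def, smul_eq_mul, ENNReal.toReal_mul]
  simp

/-- The form in which `volume_of_rays` is applied: a single constant serves all `Z`. -/
theorem exists_const {X ι : Type*} [Fintype ι] [MeasurableSpace X] {μ : Measure X}
    {c : ι → ℝ≥0} {g : X → ι → ℝ} (hg : MeasurePreserving g μ (rays c)) (hc : ∀ i, 0 < c i)
    {q : ℕ} (hq : Fintype.card ι = q) (T : ℝ → ℝ) {S : ℝ → Set X}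
    (hS : ∀ Z, 1 ≤ Z → ∀ x, x ∈ S Z ↔ (∀ i, 1 ≤ g x i) ∧ ∏ i, g x i < T Z) :
    ∃ C : ℝ, 0 < C ∧ ∀ Z : ℝ, 1 ≤ Z → (μ (S Z)).toReal = C * hypVol q (T Z) := by
  refine ⟨∏ i, (c i : ℝ), Finset.prod_pos fun i _ => by exact_mod_cast hc i, fun Z hZ => ?_⟩
  rw [← volume_of_rays hg hq (T Z)]
  congr 2
  ext x
  exact hS Z hZ x

theorem rays_prod {X Y ι κ : Type*} [Fintype ι] [Fintype κ] [MeasurableSpace X]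
    [MeasurableSpace Y] {μ : Measure X} {ν : Measure Y} [SigmaFinite μ] [SigmaFinite ν]
    {c : ι → ℝ≥0} {d : κ → ℝ≥0}
    {g : X → ι → ℝ} {h : Y → κ → ℝ} (hg : MeasurePreserving g μ (rays c))
    (hh : MeasurePreserving h ν (rays d)) :
    MeasurePreserving (fun p : X × Y => (Sum.elim (g p.1) (h p.2) : ι ⊕ κ → ℝ)) (μ.prod ν)
      (rays (Sum.elim c d)) := by
  have := (measurePreserving_sumPiEquivProdPi_symm
    (X := fun _ : ι ⊕ κ => ℝ) (fun i => (Sum.elim c d i) • ray)).comp (hg.prod hh)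
  have e : (fun p : X × Y => (Sum.elim (g p.1) (h p.2) : ι ⊕ κ → ℝ)) =
      (MeasurableEquiv.sumPiEquivProdPi fun _ : ι ⊕ κ => ℝ).symm ∘ Prod.map g h := by
    ext p i
    cases i <;> rfl
  rw [e]
  exact this

theorem rays_pi {ι : Type*} [Fintype ι] {X : Type*} [MeasurableSpace X]
    {μ : Measure X} [SigmaFinite μ] {g : ι → X → ℝ} {c : ι → ℝ≥0}
    (hg : ∀ i, MeasurePreserving (g i) μ (c i • ray)) :
    MeasurePreserving (fun (x : ι → X) i => g i (x i)) (Measure.pi fun _ => μ) (rays c) :=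
  measurePreserving_pi _ _ hg

variable {E : Type*} [NormedAddCommGroup E] [NormedSpace ℝ E] [MeasurableSpace E] [BorelSpace E]
  [FiniteDimensional ℝ E] (μ : Measure E) [μ.IsAddHaarMeasure]

/-- Homogeneity of degree `dim E` makes the sublevel volume linear in the level. -/
theorem sublevel {g : E → ℝ} (hE : 0 < finrank ℝ E)
    (hom : ∀ r : ℝ, 0 < r → ∀ x, g (r • x) = r ^ finrank ℝ E * g x) {z : ℝ} (hz : 0 < z) :
    μ {x | g x < z} = ENNReal.ofReal z * μ {x | g x < 1} := by
  set r : ℝ := z ^ ((finrank ℝ E : ℝ)⁻¹) with hr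
  have hr0 : 0 < r := Real.rpow_pos_of_pos hz _
  have hrz : r ^ finrank ℝ E = z := Real.rpow_inv_natCast_pow hz.le hE.ne'
  have : {x | g x < z} = r • {x | g x < 1} := by
    ext x
    rw [Set.mem_smul_set_iff_inv_smul_mem₀ hr0.ne']
    have := hom r hr0 (r⁻¹ • x)
    rw [smul_inv_smul₀ hr0.ne', hrz] at this
    simp only [Set.mem_ofPred_eq, this]
    constructor
    · intro h; by_contra! h'; nlinarith
    · intro h; nlinarith
  rw [this, Measure.addHaar_smul, hrz, abs_of_pos hz]

/-- A nonnegative function homogeneous of degree `dim E`, with sublevel set `{g < 1}` of finite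
volume `V`, pushes Haar measure forward to `V` times Lebesgue measure on `[0, ∞)`: both measures
agree on all intervals `[a, b)`. -/
theorem measurePreserving_ray {g : E → ℝ} (hE : 0 < finrank ℝ E) (hgm : Measurable g)
    (h0 : ∀ x, 0 ≤ g x)
    (hom : ∀ r : ℝ, 0 < r → ∀ x, g (r • x) = r ^ finrank ℝ E * g x)
    (hfin : μ {x | g x < 1} ≠ ∞) :
    MeasurePreserving g μ ((μ {x | g x < 1}).toNNReal • ray) := by
  refine ⟨hgm, ?_⟩
  set V := μ {x | g x < 1} with hV
  have sub : ∀ z : ℝ, μ {x | g x < z} = ENNReal.ofReal z * V := by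
    intro z
    rcases lt_or_ge 0 z with hz | hz
    · exact sublevel μ hE hom hz
    · have : {x | g x < z} = ∅ := by
        ext x; simpa using hz.trans (h0 x)
      simp [this, ENNReal.ofReal_of_nonpos hz]
  have key : ∀ a b : ℝ, a < b →
      (μ.map g) (Set.Ico a b) = (ENNReal.ofReal b - ENNReal.ofReal a) * V := by
    intro a b hab
    rw [Measure.map_apply hgm measurableSet_Ico]
    have : g ⁻¹' Set.Ico a b = {x | g x < b} \ {x | g x < a} := by
      ext x; simp [and_comm]
    rw [this, measure_sdiff (show {x | g x < a} ⊆ {x | g x < b} from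
      fun x hx => lt_trans hx hab) (measurableSet_lt hgm measurable_const).nullMeasurableSet,
      sub, sub, ENNReal.sub_mul]
    · simp [hfin]
    · rw [sub]; exact ENNReal.mul_ne_top (by simp) hfin
  refine Measure.ext_of_Ico' _ _ (fun a b hab => ?_) (fun a b hab => ?_)
  · rw [key a b hab]
    exact ENNReal.mul_ne_top (by simp) hfin
  · rw [key a b hab, Measure.smul_apply, ray, Measure.restrict_apply measurableSet_Ico,
      ENNReal.smul_def, smul_eq_mul, ENNReal.coe_toNNReal hfin, mul_comm]
    congr 1
    have : Set.Ico a b ∩ Set.Ici 0 = Set.Ico (max a 0) b := by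
      ext x; simp
    rw [this, Real.volume_Ico]
    rcases le_total 0 a with h | h
    · rw [max_eq_left h, ENNReal.ofReal_sub _ h]
    · simp [max_eq_right h, ENNReal.ofReal_of_nonpos h]

omit [NormedSpace ℝ E] [BorelSpace E] [FiniteDimensional ℝ E] in
theorem sublevel_pos {g : E → ℝ} (hgc : Continuous g) (hg0 : g 0 < 1) :
    0 < μ {x | g x < 1} :=
  (isOpen_lt hgc continuous_const).measure_pos μ ⟨0, hg0⟩

/-- Regrouping `(A × B)²` as `A² × B²`. With `A` and `B` the real and complex parts of `K_∞`, this
separates `K_∞²` into its real and complex places. -/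
theorem measurePreserving_swap4 {A B : Type*} [MeasurableSpace A] [MeasurableSpace B]
    (μ : Measure A) (ν : Measure B) [SigmaFinite μ] [SigmaFinite ν] :
    MeasurePreserving (fun p : (A × B) × (A × B) => ((p.1.1, p.2.1), (p.1.2, p.2.2)))
      ((μ.prod ν).prod (μ.prod ν)) ((μ.prod μ).prod (ν.prod ν)) := by
  have a := measurePreserving_prodAssoc μ ν (μ.prod ν)
  have b := (MeasurePreserving.id μ).prod ((measurePreserving_prodAssoc ν μ ν).symm)
  have c := (MeasurePreserving.id μ).prod ((Measure.measurePreserving_swap (μ := ν) (ν := μ)).prod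
    (MeasurePreserving.id ν))
  have d := (MeasurePreserving.id μ).prod (measurePreserving_prodAssoc μ ν ν)
  have e := (measurePreserving_prodAssoc μ μ (ν.prod ν)).symm
  exact e.comp (d.comp (c.comp (b.comp a)))

end rays

/-! ### Factorisation of irreducible binary forms over `ℂ` -/

section poly
variable {k : Type*} [Field k]

theorem eq_zero_of_isUnit {G : MvPolynomial (Fin 2) k} {e : ℕ} (h : G.IsHomogeneous e)
    (hu : IsUnit G) : e = 0 := by
  rw [← h.totalDegree hu.ne_zero]
  exact (MvPolynomial.isUnit_iff_totalDegree_of_isReduced.1 hu).2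

theorem natDegree_dehom {G : MvPolynomial (Fin 2) k} {d : ℕ} (h : G.IsHomogeneous d) :
    (MvPolynomial.aeval ![Polynomial.X, (1 : Polynomial k)] G).natDegree ≤ d := by
  rw [MvPolynomial.aeval_def, MvPolynomial.eval₂_eq']
  refine Polynomial.natDegree_sum_le_of_forall_le _ _ fun m hm => ?_
  have hm' : m.degree = d := by
    have := h (MvPolynomial.mem_support_iff.1 hm)
    rw [Finsupp.degree_eq_weight_one]; exact this
  have : m 0 ≤ d := by rw [← hm']; exact Finsupp.le_degree 0 m
  simp only [Fin.prod_univ_two, Matrix.cons_val_zero, Matrix.cons_val_one, one_pow, mul_one,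
    Polynomial.algebraMap_eq]
  exact (Polynomial.natDegree_C_mul_X_pow_le _ _).trans this

/-- Dehomogenising an irreducible form of degree `d ≥ 2` by `t = 1` gives an irreducible polynomial
of the same degree: the degree can only drop if `t` divides the form. -/
theorem irreducible_dehom {G : MvPolynomial (Fin 2) k} {d : ℕ} (h : G.IsHomogeneous d)
    (hd : 2 ≤ d) (hG : Irreducible G) :
    ∃ p : Polynomial k, Irreducible p ∧ p.natDegree = d ∧ p.homogenize d = G := by
  set p := MvPolynomial.aeval ![Polynomial.X, (1 : Polynomial k)] G with hp
  have hpG : p.homogenize d = G := Polynomial.homogenize_eq_of_isHomogeneous h rfl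
  have hle : p.natDegree ≤ d := natDegree_dehom h
  have hp0 : p ≠ 0 := by
    intro h0; rw [h0] at hpG; simp at hpG; exact hG.ne_zero hpG.symm
  have hX : ¬ IsUnit (MvPolynomial.X 1 : MvPolynomial (Fin 2) k) := fun hu =>
    one_ne_zero (eq_zero_of_isUnit (MvPolynomial.isHomogeneous_X k 1) hu)
  have hdeg : p.natDegree = d := by
    by_contra hne
    -- A drop in degree splits off a power of `t`; as `d ≥ 2`, irreducibility rules that out.
    have hfac : G = p.homogenize p.natDegree * MvPolynomial.X 1 ^ (d - p.natDegree) := by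
      have := Polynomial.homogenize_mul p 1 (m := p.natDegree) (n := d - p.natDegree) le_rfl
        (by simp)
      rw [mul_one, Nat.add_sub_cancel' hle, hpG] at this
      simpa using this
    rcases hG.isUnit_or_isUnit hfac with hu | hu
    · have h0 := eq_zero_of_isUnit (Polynomial.isHomogeneous_homogenize p) hu
      rw [h0, Nat.sub_zero] at hfac
      obtain ⟨m, rfl⟩ := Nat.exists_eq_add_of_le' hd
      have hfac' : G = (p.homogenize 0 * MvPolynomial.X 1 ^ (m + 1)) * MvPolynomial.X 1 := by
        rw [hfac]; ring
      rcases hG.isUnit_or_isUnit hfac' with hu | hu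
      · exact hX ((isUnit_pow_succ_iff).1 (isUnit_of_mul_isUnit_right hu))
      · exact hX hu
    · rw [isUnit_pow_iff (by omega)] at hu
      exact hX hu
  refine ⟨p, ⟨fun hu => ?_, fun a b hab => ?_⟩, hdeg, hpG⟩
  · rw [Polynomial.natDegree_eq_zero_of_isUnit hu] at hdeg; omega
  · have ha : a ≠ 0 := by rintro rfl; simp at hab; exact hp0 hab
    have hb : b ≠ 0 := by rintro rfl; simp at hab; exact hp0 hab
    have hn : d = a.natDegree + b.natDegree := by
      rw [← Polynomial.natDegree_mul ha hb, ← hab, hdeg]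
    have := Polynomial.homogenize_mul a b (m := a.natDegree) (n := b.natDegree) le_rfl le_rfl
    rw [← hab, ← hn, hpG] at this
    rcases hG.isUnit_or_isUnit this with hu | hu
    · left
      have h0 := eq_zero_of_isUnit (Polynomial.isHomogeneous_homogenize a) hu
      exact Polynomial.isUnit_iff_degree_eq_zero.2 (by
        rw [Polynomial.degree_eq_natDegree ha, h0]; rfl)
    · right
      have h0 := eq_zero_of_isUnit (Polynomial.isHomogeneous_homogenize b) hu
      exact Polynomial.isUnit_iff_degree_eq_zero.2 (by
        rw [Polynomial.degree_eq_natDegree hb, h0]; rfl)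

/-- Over `ℂ` an irreducible form of degree `d ≥ 2` is a nonzero constant times `d` linear factors
`s - r t` with distinct `r`. Separability comes from characteristic zero, and `t` is not a factor. -/
theorem exists_linear_factors [CharZero k] {G : MvPolynomial (Fin 2) k} {d : ℕ}
    (h : G.IsHomogeneous d) (hd : 2 ≤ d) (hG : Irreducible G) (σ : k →+* ℂ) :
    ∃ (A : ℂ) (R : Finset ℂ), A ≠ 0 ∧ R.card = d ∧
      ∀ s t : ℂ, MvPolynomial.eval ![s, t] (G.map σ) = A * ∏ r ∈ R, (s - r * t) := by
  obtain ⟨p, hp, hpd, rfl⟩ := irreducible_dehom h hd hG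
  have hsep : (p.map σ).Separable := hp.separable.map
  have hsplit := IsAlgClosed.splits (p.map σ)
  have hnd := Polynomial.nodup_roots hsep
  have hcard : (p.map σ).roots.toFinset.card = d := by
    rw [Multiset.toFinset_card_of_nodup hnd, ← hsplit.natDegree_eq_card_roots,
      Polynomial.natDegree_map, hpd]
  refine ⟨(p.map σ).leadingCoeff, (p.map σ).roots.toFinset, ?_, hcard, fun s t => ?_⟩
  · simpa using hp.ne_zero
  · have hprod : p.map σ = Polynomial.C (p.map σ).leadingCoeff *
        ∏ r ∈ (p.map σ).roots.toFinset, (Polynomial.X - Polynomial.C r) := by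
      conv_lhs => rw [hsplit.eq_prod_roots]
      rw [Finset.prod, Multiset.toFinset_val, hnd.dedup]
    have hsum : d = ∑ r ∈ (p.map σ).roots.toFinset, 1 := by simp [hcard]
    rw [← Polynomial.homogenize_map]
    conv_lhs => rw [hprod, Polynomial.homogenize_C_mul, hsum,
      Polynomial.homogenize_finsetProd (by intro i _; simp)]
    simp [Polynomial.homogenize_X]

end poly

/-! ### Finite volume of the sublevel sets of a product of linear factors -/

section slab
variable {E : Type*} [NormedAddCommGroup E] [NormedSpace ℝ E] [MeasurableSpace E] [BorelSpace E]
  [FiniteDimensional ℝ E] [Nontrivial E] (μ : Measure E) [μ.IsAddHaarMeasure] (φ : E →ₗᵢ[ℝ] ℂ)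

/-- The isometry `φ : E → ℂ` lets the real and complex places be treated together (`E = ℝ` or
`E = ℂ`). For each `t`, the slice in `s` of the set lies in a ball of radius `2 * C * (1 + ‖t‖) ^ (-2)`,
of volume `≪ (1 + ‖t‖) ^ (-2 * m)` with `m = dim E`, and this is integrable over `E`. -/
theorem slab_finite (r : ℂ) {C : ℝ} (hC : 0 < C) :
    (μ.prod μ) {x : E × E | ‖φ x.1 - r * φ x.2‖ * (1 + ‖x.2‖) ^ 2 < C} ≠ ∞ := by
  have hopen : IsOpen {x : E × E | ‖φ x.1 - r * φ x.2‖ * (1 + ‖x.2‖) ^ 2 < C} := by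
    have := φ.continuous
    exact isOpen_lt (by fun_prop) continuous_const
  rw [Measure.prod_apply_symm hopen.measurableSet]
  set m := finrank ℝ E with hm
  have hm0 : 0 < m := finrank_pos
  have hslice : ∀ t : E, μ ((fun s => (s, t)) ⁻¹'
      {x : E × E | ‖φ x.1 - r * φ x.2‖ * (1 + ‖x.2‖) ^ 2 < C}) ≤
      ENNReal.ofReal ((2 * C) ^ m * (1 + ‖t‖) ^ (-(2 * m : ℝ))) * μ (Metric.ball 0 1) := by
    intro t
    have ht : 0 < 1 + ‖t‖ := by positivity
    have hrad : ((2 * C) / (1 + ‖t‖) ^ 2) ^ m = (2 * C) ^ m * (1 + ‖t‖) ^ (-(2 * m : ℝ)) := by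
      rw [div_pow, ← pow_mul, Real.rpow_neg ht.le, div_eq_mul_inv]
      congr 2
      rw [← Real.rpow_natCast]; push_cast; rfl
    rw [← hrad, hm, ← Measure.addHaar_ball_of_pos μ 0 (by positivity)]
    -- The center `r * φ t` need not lie in the range of `φ` (`E = ℝ`, `r` not real), so the ball is
    -- centered at a point of the slice instead, at the cost of doubling the radius.
    by_cases hne : ∃ s₀, ‖φ s₀ - r * φ t‖ * (1 + ‖t‖) ^ 2 < C
    · obtain ⟨s₀, h0⟩ := hne
      rw [Measure.addHaar_ball_center, ← Measure.addHaar_ball_center μ s₀]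
      refine measure_mono fun s hs => ?_
      have hs : ‖φ s - r * φ t‖ * (1 + ‖t‖) ^ 2 < C := hs
      rw [← lt_div_iff₀ (by positivity)] at hs h0
      rw [Metric.mem_ball, dist_eq_norm, ← φ.norm_map, map_sub]
      calc ‖φ s - φ s₀‖ = ‖(φ s - r * φ t) - (φ s₀ - r * φ t)‖ := by congr 1; ring
        _ ≤ ‖φ s - r * φ t‖ + ‖φ s₀ - r * φ t‖ := norm_sub_le _ _
        _ < C / (1 + ‖t‖) ^ 2 + C / (1 + ‖t‖) ^ 2 := add_lt_add hs h0
        _ = 2 * C / (1 + ‖t‖) ^ 2 := by ring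
    · have : ((fun s => (s, t)) ⁻¹'
          {x : E × E | ‖φ x.1 - r * φ x.2‖ * (1 + ‖x.2‖) ^ 2 < C}) = ∅ := by
        ext s
        simp only [Set.mem_preimage, Set.mem_ofPred_eq, Set.mem_empty_iff_false, iff_false]
        exact fun h => hne ⟨s, h⟩
      rw [this]; simp
  refine ne_top_of_le_ne_top ?_ (lintegral_mono hslice)
  rw [lintegral_mul_const' _ _ measure_ball_lt_top.ne]
  refine ENNReal.mul_ne_top ?_ measure_ball_lt_top.ne
  have hint : Integrable (fun t : E => (2 * C) ^ m * (1 + ‖t‖) ^ (-(2 * m : ℝ))) μ := by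
    refine Integrable.const_mul (integrable_one_add_norm ?_) _
    have : (0 : ℝ) < m := by exact_mod_cast hm0
    rw [← hm]; linarith
  exact hint.lintegral_lt_top.ne

omit [MeasurableSpace E] [BorelSpace E] [FiniteDimensional ℝ E] [Nontrivial E] in
/-- Two distinct factors `s - r t`, `s - r' t` cannot both be small: they form a coordinate system,
so their maximum is bounded below by a multiple of the norm. -/
theorem norm_le_of_two {r r' : ℂ} (h : r ≠ r') :
    ∃ c : ℝ, 0 < c ∧ ∀ x : E × E, c * ‖x‖ ≤ max ‖φ x.1 - r * φ x.2‖ ‖φ x.1 - r' * φ x.2‖ := by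
  have hδ : 0 < ‖r - r'‖ := norm_pos_iff.2 (sub_ne_zero.2 h)
  have hR := norm_nonneg r
  refine ⟨‖r - r'‖ / (‖r - r'‖ + 2 * ‖r‖ + 2), by positivity, fun x => ?_⟩
  set M := max ‖φ x.1 - r * φ x.2‖ ‖φ x.1 - r' * φ x.2‖ with hM
  have h1 : ‖φ x.1 - r * φ x.2‖ ≤ M := le_max_left _ _
  have h2 : ‖φ x.1 - r' * φ x.2‖ ≤ M := le_max_right _ _
  have hM0 : 0 ≤ M := (norm_nonneg _).trans h1
  have ht : ‖r - r'‖ * ‖x.2‖ ≤ 2 * M := by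
    calc ‖r - r'‖ * ‖x.2‖ = ‖(φ x.1 - r' * φ x.2) - (φ x.1 - r * φ x.2)‖ := by
          rw [← φ.norm_map x.2, ← norm_mul]; congr 1; ring
      _ ≤ _ := (norm_sub_le _ _).trans (by linarith)
  have hs : ‖x.1‖ ≤ M + ‖r‖ * ‖x.2‖ := by
    calc ‖x.1‖ = ‖(φ x.1 - r * φ x.2) + r * φ x.2‖ := by
          rw [← φ.norm_map x.1]; congr 1; ring
      _ ≤ _ := (norm_add_le _ _).trans (by rw [norm_mul, φ.norm_map]; linarith)
  rw [div_mul_eq_mul_div, div_le_iff₀ (by positivity), Prod.norm_def]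
  rcases max_cases ‖x.1‖ ‖x.2‖ with ⟨h, _⟩ | ⟨h, _⟩ <;> rw [h]
  · nlinarith
  · nlinarith

/-- With at least three distinct linear factors the region `{|F| < 1}` has finite volume: outside
the unit ball the smallest factor is `≪ ‖x‖ ^ (-2)`, so the point lies in one of finitely many
slabs. -/
theorem form_finite {A : ℝ} (hA : 0 < A) (R : Finset ℂ) (hR : 3 ≤ R.card) :
    (μ.prod μ) {x : E × E | A * ∏ r ∈ R, ‖φ x.1 - r * φ x.2‖ < 1} ≠ ∞ := by
  choose! c hc0 hc using fun (r r' : ℂ) (h : r ≠ r') => norm_le_of_two (E := E) φ h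
  set P : ℂ → ℝ := fun r => ∏ r' ∈ R.erase r, c r r' with hP
  have hP0 : ∀ r, 0 < P r := fun r => Finset.prod_pos fun r' h' =>
    hc0 _ _ (Finset.ne_of_mem_erase h').symm
  have hsub : {x : E × E | A * ∏ r ∈ R, ‖φ x.1 - r * φ x.2‖ < 1} ⊆ Metric.closedBall 0 1 ∪
      ⋃ r ∈ R, {x : E × E | ‖φ x.1 - r * φ x.2‖ * (1 + ‖x.2‖) ^ 2 < 4 / (A * P r)} := by
    intro x hx
    have hx : A * ∏ r ∈ R, ‖φ x.1 - r * φ x.2‖ < 1 := hx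
    rcases le_or_gt ‖x‖ 1 with h1 | h1
    · left; simpa using h1
    right
    -- All factors other than the smallest, `r`, are at least a constant times `‖x‖`.
    obtain ⟨r, hr, hmin⟩ := R.exists_min_image (fun r => ‖φ x.1 - r * φ x.2‖)
      (Finset.card_pos.1 (by omega))
    simp only [Set.mem_iUnion]
    refine ⟨r, hr, ?_⟩
    show ‖φ x.1 - r * φ x.2‖ * (1 + ‖x.2‖) ^ 2 < 4 / (A * P r)
    have hprod : P r * ‖x‖ ^ (R.card - 1) ≤ ∏ r' ∈ R.erase r, ‖φ x.1 - r' * φ x.2‖ := by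
      rw [← Finset.card_erase_of_mem hr, ← Finset.prod_const, hP, ← Finset.prod_mul_distrib]
      refine Finset.prod_le_prod (fun r' h' => ?_) fun r' h' => ?_
      · exact mul_nonneg (hc0 _ _ (Finset.ne_of_mem_erase h').symm).le (norm_nonneg _)
      · have := hc r r' (Finset.ne_of_mem_erase h').symm x
        rwa [max_eq_right (hmin r' (Finset.mem_of_mem_erase h'))] at this
    have hpow : ‖x‖ ^ 2 ≤ ‖x‖ ^ (R.card - 1) := pow_le_pow_right₀ h1.le (by omega)
    have ht : 1 + ‖x.2‖ ≤ 2 * ‖x‖ := by linarith [norm_snd_le x]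
    have ht2 : (1 + ‖x.2‖) ^ 2 ≤ 4 * ‖x‖ ^ 2 := by
      calc (1 + ‖x.2‖) ^ 2 ≤ (2 * ‖x‖) ^ 2 := by gcongr
        _ = _ := by ring
    rw [← Finset.mul_prod_erase R _ hr] at hx
    rw [lt_div_iff₀ (mul_pos hA (hP0 r))]
    set L := ‖φ x.1 - r * φ x.2‖ with hL
    have hL0 : 0 ≤ L := norm_nonneg _
    have hPr := hP0 r
    calc L * (1 + ‖x.2‖) ^ 2 * (A * P r) ≤ L * (4 * ‖x‖ ^ (R.card - 1)) * (A * P r) := by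
          gcongr; linarith
      _ = 4 * (A * (L * (P r * ‖x‖ ^ (R.card - 1)))) := by ring
      _ ≤ 4 * (A * (L * ∏ r' ∈ R.erase r, ‖φ x.1 - r' * φ x.2‖)) := by gcongr
      _ < 4 := by linarith
  refine ne_top_of_le_ne_top ?_ (measure_mono hsub)
  refine ne_top_of_le_ne_top ?_ (measure_union_le _ _)
  refine ENNReal.add_ne_top.2 ⟨(isCompact_closedBall 0 1).measure_lt_top.ne, ?_⟩
  refine ne_top_of_le_ne_top ?_ (measure_biUnion_finset_le _ _)
  exact ENNReal.sum_ne_top.2 fun r _ =>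
    slab_finite μ φ r (div_pos (by norm_num) (mul_pos hA (hP0 r)))

end slab

/-! ### The local functions at each archimedean place -/

section local_places

/-- The exponent `2 * dim E / d` makes `|F|`, of degree `d`, homogeneous of degree
`dim (E × E) = 2 * dim E`. -/
theorem norm_form_ray {E : Type*} [NormedAddCommGroup E] [NormedSpace ℝ E] [MeasurableSpace E]
    [BorelSpace E] [FiniteDimensional ℝ E] [Nontrivial E] (μ : Measure E) [μ.IsAddHaarMeasure]
    (φ : E →ₗᵢ[ℝ] ℂ) {f : E × E → ℝ} {A : ℝ} (hA : 0 < A) (R : Finset ℂ) {d : ℕ}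
    (hR : R.card = d) (hd : 3 ≤ d) (hf : ∀ x, f x = A * ∏ r ∈ R, ‖φ x.1 - r * φ x.2‖) :
    ∃ c : ℝ≥0, 0 < c ∧ MeasurePreserving (fun x => f x ^ (2 * finrank ℝ E / d : ℝ)) (μ.prod μ)
      (c • ray) := by
  have : SecondCountableTopology E :=
    haveI := FiniteDimensional.proper_real E
    secondCountable_of_proper
  have hm : 0 < finrank ℝ E := finrank_pos
  have hd0 : (0 : ℝ) < d := by exact_mod_cast (by omega : 0 < d)
  have ha : (0 : ℝ) < 2 * finrank ℝ E / d := by positivity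
  have hf0 : ∀ x, 0 ≤ f x := fun x => by
    rw [hf]; exact mul_nonneg hA.le (Finset.prod_nonneg fun _ _ => norm_nonneg _)
  have hcont : Continuous f := by
    have := φ.continuous
    rw [funext hf]; fun_prop
  have hgc : Continuous fun x => f x ^ (2 * finrank ℝ E / d : ℝ) :=
    hcont.rpow_const fun _ => Or.inr ha.le
  have hlt : {x | f x ^ (2 * finrank ℝ E / d : ℝ) < 1} =
      {x : E × E | A * ∏ r ∈ R, ‖φ x.1 - r * φ x.2‖ < 1} := by
    ext x
    simp only [Set.mem_ofPred_eq, ← hf]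
    refine ⟨fun h => ?_, fun h => Real.rpow_lt_one (hf0 x) h ha⟩
    by_contra! h'
    exact absurd h (Real.one_le_rpow h' ha.le).not_gt
  have hfin : (μ.prod μ) {x | f x ^ (2 * finrank ℝ E / d : ℝ) < 1} ≠ ∞ := by
    rw [hlt]; exact form_finite μ φ hA R (by omega)
  refine ⟨_, ?_, measurePreserving_ray (μ.prod μ) (by simp; omega) hgc.measurable
    (fun x => Real.rpow_nonneg (hf0 x) _) (fun r hr x => ?_) hfin⟩
  · refine ENNReal.toNNReal_pos (sublevel_pos _ hgc ?_).ne' hfin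
    rw [hf]
    have : R.Nonempty := Finset.card_pos.1 (by omega)
    simp [this.card_ne_zero, ha.ne']
  · have : f (r • x) = r ^ d * f x := by
      rw [hf, hf, ← hR, mul_left_comm, ← Finset.prod_const, ← Finset.prod_mul_distrib]
      congr 1
      refine Finset.prod_congr rfl fun z _ => ?_
      rw [Prod.smul_fst, Prod.smul_snd, map_smul, map_smul, mul_smul_comm, ← smul_sub, norm_smul,
        Real.norm_of_nonneg hr.le]
    simp only [this]
    rw [Real.mul_rpow (by positivity) (hf0 x), ← Real.rpow_natCast, ← Real.rpow_mul hr.le,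
      ← Real.rpow_natCast]
    congr 2
    rw [Module.finrank_prod]; push_cast; field_simp; ring

theorem abs_ray : ∃ c : ℝ≥0, 0 < c ∧
    MeasurePreserving (fun x : ℝ => |x|) volume (c • ray) := by
  have hfin : (volume : Measure ℝ) {x | |x| < 1} ≠ ∞ := by
    refine ne_top_of_le_ne_top (measure_ball_lt_top (x := (0 : ℝ)) (r := 1)).ne
      (measure_mono fun x hx => ?_)
    have hx : |x| < 1 := hx
    simpa using hx
  refine ⟨_, ENNReal.toNNReal_pos (sublevel_pos _ continuous_abs (by simp)).ne' hfin,
    measurePreserving_ray volume (by simp) continuous_abs.measurable abs_nonneg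
      (fun r hr x => by simp [abs_mul, abs_of_pos hr]) hfin⟩

theorem norm_sq_ray : ∃ c : ℝ≥0, 0 < c ∧
    MeasurePreserving (fun x : ℂ => ‖x‖ ^ 2) volume (c • ray) := by
  have hfin : (volume : Measure ℂ) {x | ‖x‖ ^ 2 < 1} ≠ ∞ := by
    refine ne_top_of_le_ne_top (measure_ball_lt_top (x := (0 : ℂ)) (r := 1)).ne
      (measure_mono fun x hx => ?_)
    have hx : ‖x‖ ^ 2 < 1 := hx
    rw [mem_ball_zero_iff]
    exact lt_of_pow_lt_pow_left₀ 2 zero_le_one (by simpa using hx)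
  have hc : Continuous fun x : ℂ => ‖x‖ ^ 2 := by fun_prop
  refine ⟨_, ENNReal.toNNReal_pos (sublevel_pos _ hc (by simp)).ne' hfin,
    measurePreserving_ray volume (by simp) hc.measurable (fun _ => by positivity)
      (fun r hr x => by simp [mul_pow, abs_of_pos hr]) hfin⟩

theorem sum_sq_ray : ∃ c : ℝ≥0, 0 < c ∧
    MeasurePreserving (fun x : ℝ × ℝ => |x.1 ^ 2 + x.2 ^ 2|) volume (c • ray) := by
  have hfin : (volume : Measure (ℝ × ℝ)) {x | |x.1 ^ 2 + x.2 ^ 2| < 1} ≠ ∞ := by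
    refine ne_top_of_le_ne_top (measure_ball_lt_top (x := (0 : ℝ × ℝ)) (r := 1)).ne
      (measure_mono fun x hx => ?_)
    have hx : |x.1 ^ 2 + x.2 ^ 2| < 1 := hx
    rw [abs_of_nonneg (by positivity)] at hx
    rw [mem_ball_zero_iff, Prod.norm_def, max_lt_iff, Real.norm_eq_abs, Real.norm_eq_abs,
      ← sq_lt_one_iff_abs_lt_one, ← sq_lt_one_iff_abs_lt_one]
    constructor <;> nlinarith [sq_nonneg x.1, sq_nonneg x.2]
  have hc : Continuous fun x : ℝ × ℝ => |x.1 ^ 2 + x.2 ^ 2| := by fun_prop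
  refine ⟨_, ENNReal.toNNReal_pos (sublevel_pos _ hc (by simp)).ne' hfin,
    measurePreserving_ray volume (by simp) hc.measurable (fun _ => by positivity)
      (fun r hr x => ?_) hfin⟩
  have : (r • x).1 ^ 2 + (r • x).2 ^ 2 = r ^ 2 * (x.1 ^ 2 + x.2 ^ 2) := by
    simp; ring
  rw [this, abs_mul, abs_of_nonneg (sq_nonneg r)]
  simp

variable {K : Type*} [Field K] [NumberField K]

omit [NumberField K] in
theorem complexEvalForm_eq (F : MvPolynomial (Fin 2) (𝓞 K))
    (w : {w : InfinitePlace K // w.IsComplex}) (s t : ℂ) :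
    complexEvalForm K F w s t =
      MvPolynomial.eval ![s, t] ((F.map (algebraMap (𝓞 K) K)).map w.1.embedding) := by
  rw [complexEvalForm, MvPolynomial.map_map]; rfl

omit [NumberField K] in
theorem realEvalForm_eq (F : MvPolynomial (Fin 2) (𝓞 K))
    (w : {w : InfinitePlace K // w.IsReal}) (s t : ℝ) :
    (realEvalForm K F w s t : ℂ) =
      MvPolynomial.eval ![(s : ℂ), (t : ℂ)] ((F.map (algebraMap (𝓞 K) K)).map w.1.embedding) := by
  have h1 : w.1.embedding.comp (algebraMap (𝓞 K) K) = Complex.ofRealHom.comp (realEmbed K w) := by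
    ext x
    simp [realEmbed]
  have h2 : (![(s : ℂ), (t : ℂ)]) = Complex.ofRealHom ∘ ![s, t] := by
    ext i; fin_cases i <;> rfl
  rw [MvPolynomial.map_map, h1, h2, ← MvPolynomial.map_map, realEvalForm,
    MvPolynomial.eval_map (f := Complex.ofRealHom),
    ← MvPolynomial.eval₂_comp]
  rfl

theorem real_form_ray {F : MvPolynomial (Fin 2) (𝓞 K)} {d : ℕ} (h : F.IsHomogeneous d)
    (hd : 3 ≤ d) (hirr : Irreducible (F.map (algebraMap (𝓞 K) K)))
    (w : {w : InfinitePlace K // w.IsReal}) :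
    ∃ c : ℝ≥0, 0 < c ∧ MeasurePreserving
      (fun x : ℝ × ℝ => |realEvalForm K F w x.1 x.2| ^ (2 / d : ℝ)) volume (c • ray) := by
  obtain ⟨A, R, hA, hR, hAR⟩ := exists_linear_factors (h.map _) (by omega) hirr w.1.embedding
  have := norm_form_ray (volume : Measure ℝ) Complex.ofRealLI
    (f := fun x => |realEvalForm K F w x.1 x.2|) (norm_pos_iff.2 hA) R hR hd (fun x => by
      rw [← Real.norm_eq_abs, ← Complex.norm_real, realEvalForm_eq, hAR, norm_mul, norm_prod]; rfl)
  simpa [← Measure.volume_eq_prod] using this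

theorem complex_form_ray {F : MvPolynomial (Fin 2) (𝓞 K)} {d : ℕ} (h : F.IsHomogeneous d)
    (hd : 3 ≤ d) (hirr : Irreducible (F.map (algebraMap (𝓞 K) K)))
    (w : {w : InfinitePlace K // w.IsComplex}) :
    ∃ c : ℝ≥0, 0 < c ∧ MeasurePreserving
      (fun x : ℂ × ℂ => (‖complexEvalForm K F w x.1 x.2‖ ^ 2) ^ (2 / d : ℝ)) volume (c • ray) := by
  obtain ⟨A, R, hA, hR, hAR⟩ := exists_linear_factors (h.map _) (by omega) hirr w.1.embedding
  obtain ⟨c, hc, hp⟩ := norm_form_ray (volume : Measure ℂ) LinearIsometry.id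
    (f := fun x => ‖complexEvalForm K F w x.1 x.2‖) (norm_pos_iff.2 hA) R hR hd (fun x => by
      rw [complexEvalForm_eq, hAR, norm_mul, norm_prod]; rfl)
  refine ⟨c, hc, ?_⟩
  have he : (fun x : ℂ × ℂ => (‖complexEvalForm K F w x.1 x.2‖ ^ 2) ^ (2 / d : ℝ)) =
      fun x => ‖complexEvalForm K F w x.1 x.2‖ ^ (2 * finrank ℝ ℂ / d : ℝ) := by
    ext x
    rw [← Real.rpow_natCast, ← Real.rpow_mul (norm_nonneg _), Complex.finrank_real_complex]
    congr 1; push_cast; ring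
  rw [he]
  exact hp

theorem card_places : Fintype.card ({w : InfinitePlace K // w.IsReal} ⊕
    {w : InfinitePlace K // w.IsComplex}) = Fintype.card (InfinitePlace K) := by
  rw [Fintype.card_sum, card_eq_nrRealPlaces_add_nrComplexPlaces]

end local_places
end HypVol

/-- **Lemma 4.8 (exact volumes of norm-hyperbolic regions).** Let `q = |Ω_∞|`. There are
positive constants `c_s`, `c_i`, `c_{Ω′,Ω″}` such that for all `Z ≥ 1`:
`vol D*_s(Z) = c_s I_q(Z)`; `vol D*_i(Z) = c_i I_q(Z^{2/d_i})` for each `i` with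
`d_i ≥ 3`; and `vol D*_{Ω′,Ω″}(Z) = c_{Ω′,Ω″} I_q(Z)` for each set `Ω′` of real places,
with `Ω″ = Ω_∞ ∖ Ω′`. -/
theorem volumes_of_hyperbolic_regions
    (K : Type*) [Field K] [NumberField K]
    (n : ℕ) (F : Fin n → MvPolynomial (Fin 2) (𝓞 K)) (dF : Fin n → ℕ)
    (hhom : ∀ i, (F i).IsHomogeneous (dF i))
    (hpos : ∀ i, 0 < dF i)
    (hirr : ∀ i, Irreducible ((F i).map (algebraMap (𝓞 K) K))) :
    (∃ c : ℝ, 0 < c ∧ ∀ Z : ℝ, 1 ≤ Z →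
      (volume {s : KInfty K | (∀ w, 1 ≤ |s.1 w|) ∧ (∀ w, 1 ≤ ‖s.2 w‖) ∧
          normInfty K s < Z}).toReal
        = c * hypVol (Fintype.card (InfinitePlace K)) Z) ∧
    (∀ i : Fin n, 3 ≤ dF i →
      ∃ c : ℝ, 0 < c ∧ ∀ Z : ℝ, 1 ≤ Z →
        (volume {p : KInfty K × KInfty K |
            (∀ w, 1 ≤ |realEvalForm K (F i) w (p.1.1 w) (p.2.1 w)|) ∧
            (∀ w, 1 ≤ ‖complexEvalForm K (F i) w (p.1.2 w) (p.2.2 w)‖) ∧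
            normInfty K (evalAtPlaces K (F i) p.1 p.2) < Z}).toReal
          = c * hypVol (Fintype.card (InfinitePlace K)) (Z ^ (2 / (dF i : ℝ)))) ∧
    (∀ Ω' : Finset {w : InfinitePlace K // w.IsReal},
      ∃ c : ℝ, 0 < c ∧ ∀ Z : ℝ, 1 ≤ Z →
        (volume {x : ({w : {w : InfinitePlace K // w.IsReal} // w ∈ Ω'} → ℝ × ℝ) ×
              ({w : {w : InfinitePlace K // w.IsReal} // w ∉ Ω'} → ℝ) ×
              ({w : InfinitePlace K // w.IsComplex} → ℂ) |
            (∀ w, 1 ≤ |(x.1 w).1 ^ 2 + (x.1 w).2 ^ 2|) ∧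
            (∀ w, 1 ≤ |x.2.1 w|) ∧ (∀ w, 1 ≤ ‖x.2.2 w‖) ∧
            (∏ w, |(x.1 w).1 ^ 2 + (x.1 w).2 ^ 2|) * (∏ w, |x.2.1 w|) *
              (∏ w, ‖x.2.2 w‖ ^ 2) < Z}).toReal
          = c * hypVol (Fintype.card (InfinitePlace K)) Z) := by
  classical
  refine ⟨?_, fun i hi => ?_, fun Ω' => ?_⟩
  · obtain ⟨a, ha, hA⟩ := HypVol.abs_ray
    obtain ⟨b, hb, hB⟩ := HypVol.norm_sq_ray
    have hg := HypVol.rays_prod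
      (HypVol.rays_pi fun _ : {w : InfinitePlace K // w.IsReal} => hA)
      (HypVol.rays_pi fun _ : {w : InfinitePlace K // w.IsComplex} => hB)
    refine HypVol.exists_const hg ?_ HypVol.card_places (fun Z => Z) fun Z _ x => ?_
    · rintro (w | w) <;> simpa
    · simp [normInfty, Fintype.prod_sum_type, and_assoc]
  · choose a ha hA using HypVol.real_form_ray (hhom i) hi (hirr i)
    choose b hb hB using HypVol.complex_form_ray (hhom i) hi (hirr i)
    have hd : (0 : ℝ) < 2 / dF i := by have := hpos i; positivity
    have hg := ((HypVol.rays_prod (HypVol.rays_pi hA) (HypVol.rays_pi hB)).comp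
      ((volume_measurePreserving_arrowProdEquivProdArrow ℝ ℝ
        {w : InfinitePlace K // w.IsReal}).symm.prod
      (volume_measurePreserving_arrowProdEquivProdArrow ℂ ℂ
        {w : InfinitePlace K // w.IsComplex}).symm)).comp
      (HypVol.measurePreserving_swap4
        (volume : Measure ({w : InfinitePlace K // w.IsReal} → ℝ))
        (volume : Measure ({w : InfinitePlace K // w.IsComplex} → ℂ)))
    -- `hg` with the composite of the regrouping maps written out on `K_∞²`.
    have hg' : MeasurePreserving (fun p : KInfty K × KInfty K =>
        (Sum.elim (fun w => |realEvalForm K (F i) w (p.1.1 w) (p.2.1 w)| ^ (2 / (dF i : ℝ)))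
          (fun w => (‖complexEvalForm K (F i) w (p.1.2 w) (p.2.2 w)‖ ^ 2) ^ (2 / (dF i : ℝ))) :
          {w : InfinitePlace K // w.IsReal} ⊕ {w : InfinitePlace K // w.IsComplex} → ℝ))
        volume (HypVol.rays (Sum.elim a b)) := hg
    refine HypVol.exists_const hg' ?_ HypVol.card_places (fun Z => Z ^ (2 / (dF i : ℝ)))
      fun Z hZ p => ?_
    · rintro (w | w) <;> simp [ha, hb]
    · have hN : 0 ≤ normInfty K (evalAtPlaces K (F i) p.1 p.2) := by
        unfold normInfty; positivity
      have hone : ∀ y : ℝ, 0 ≤ y → (1 ≤ y ^ (2 / (dF i : ℝ)) ↔ 1 ≤ y) := fun y hy => by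
        simpa using Real.rpow_le_rpow_iff zero_le_one hy hd
      have hprod : normInfty K (evalAtPlaces K (F i) p.1 p.2) ^ (2 / (dF i : ℝ)) =
          (∏ w, |realEvalForm K (F i) w (p.1.1 w) (p.2.1 w)| ^ (2 / (dF i : ℝ))) *
          ∏ w, (‖complexEvalForm K (F i) w (p.1.2 w) (p.2.2 w)‖ ^ 2) ^ (2 / (dF i : ℝ)) := by
        rw [Real.finsetProd_rpow _ _ fun w _ => abs_nonneg _,
          Real.finsetProd_rpow _ _ fun w _ => sq_nonneg _,
          ← Real.mul_rpow (by positivity) (by positivity)]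
        rfl
      rw [Set.mem_ofPred_eq, ← Real.rpow_lt_rpow_iff hN (zero_le_one.trans hZ) hd, hprod,
        Fintype.prod_sum_type]
      simp only [Sum.forall, Sum.elim_inl, Sum.elim_inr, hone _ (abs_nonneg _),
        hone _ (sq_nonneg _), one_le_sq_iff₀ (norm_nonneg _), and_assoc]
  · obtain ⟨a, ha, hA⟩ := HypVol.sum_sq_ray
    obtain ⟨b, hb, hB⟩ := HypVol.abs_ray
    obtain ⟨c, hc, hC⟩ := HypVol.norm_sq_ray
    have hg := HypVol.rays_prod
      (HypVol.rays_pi fun _ : {w : {w : InfinitePlace K // w.IsReal} // w ∈ Ω'} => hA)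
      (HypVol.rays_prod
        (HypVol.rays_pi fun _ : {w : {w : InfinitePlace K // w.IsReal} // w ∉ Ω'} => hB)
        (HypVol.rays_pi fun _ : {w : InfinitePlace K // w.IsComplex} => hC))
    have hcard : Fintype.card ({w : {w : InfinitePlace K // w.IsReal} // w ∈ Ω'} ⊕
        {w : {w : InfinitePlace K // w.IsReal} // w ∉ Ω'} ⊕
        {w : InfinitePlace K // w.IsComplex}) = Fintype.card (InfinitePlace K) := by
      rw [← HypVol.card_places, ← Fintype.card_congr (Equiv.sumAssoc _ _ _)]
      exact Fintype.card_congr (Equiv.sumCongr (Equiv.sumCompl _) (Equiv.refl _))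
    refine HypVol.exists_const hg ?_ hcard (fun Z => Z) fun Z _ x => ?_
    · rintro (w | w | w) <;> simpa
    · simp [Fintype.prod_sum_type, and_assoc, mul_assoc]
end

section
/- Let q := |Ω_∞|, and let 1 ≤ i ≤ n, X ≥ 1 and 1 ≤ Z_1 ≤ Z_2. Then: if d_i = 1, vol R_i(X;Z_1,Z_2) ≪ X·(I_q(Z_2) − I_q(Z_1)); if d_i ≥ 3, vol R_i(X;Z_1,Z_2) ≪ I_q(Z_2^{2/d_i}) − I_q(Z_1^{2/d_i}); and if d_i = 2, letting Ω′ be the set of real archimedean places w at which F_i is irreducible over K_w and Ω″ := Ω_∞ ∖ Ω′, one has vol R_i(X;Z_1,Z_2) ≪ ∫ over tuples (t_w)_{w∈Ω″} with each |t_w|_w ≥ 1 of [I_q(Z_2·∏_{w∈Ω″}|t_w|_w^{−m_w}) − I_q(Z_1·∏_{w∈Ω″}|t_w|_w^{−m_w})] ∏_{w∈Ω″}dt_w. -/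
/-!
The volume of `R_i(X; Z₁, Z₂)` is computed place by place. At a place `w`, with `m = m_w`, the local
part of the region lies in `{|F_i| ≥ 1} ⊆ K_w²`, and Lebesgue measure on it is pushed forward along
a map `p ↦ (y, t)` with `y ≥ 1` and `y |t|^m` equal to a power of `|F_i(p)|^m`. Up to a constant
the image is bounded by `dy` on `[1, ∞)` times a measure `τ_w` in `t`:

* If `d ≥ 3`, or if `d = 2` and `F_i` is irreducible over a real `K_w`, then `y = |F_i|^{2m/d}`, and
  `τ_w` is the unit mass at `1` (`local_bound_hom`). This function is homogeneous of degree
  `dim_ℝ K_w² = 2m`, so its sublevel sets have volume linear in the level, provided that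
  `{|F_i| ≤ 1}` has finite volume. For `d ≥ 3` finiteness holds because `F_i` has only simple zeros
  on the projective line, so that `{|F_i| ≤ 1}` has thin cusps (`finite_sublevel`); an irreducible
  quadratic form has no zeros, so that `{|F_i| ≤ 1}` is bounded
  (`finite_sublevel_of_irreducible`).
* If `d = 2` and `F_i = G H` over `K_w`, then `y = |G|^m` and `t = H`, where `τ_w` is Lebesgue
  measure on `|t| ≥ 1`; this is a linear change of variables (`local_bound_split`). The region
  satisfies `|G|, |H| ≥ 1` since both factors belong to the set of forms `H_w`.
* If `d = 1`, then `y = |F_i|^m` and `t = 1`; the variable complementing `F_i` ranges over a ball of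
  volume `O(X^{m/[K:ℚ]})`, and these volumes multiply to `O(X)` (`local_bound_lin`).

Multiplying these comparisons over all places and slicing along `t` bounds the volume of the region
by the integral over `t` of the volume of `{y : y_w ≥ 1, Z₁ ≤ N ∏ y_w < Z₂}`, where
`N = ∏ |t_w|^{m_w}` (`volume_le_lintegral`). This inner volume is `I_q(Z₂ / N) - I_q(Z₁ / N)`
(`slice_eq`). When `d ≥ 3`, the `Z_j` are first raised to the power `2/d`.

The integrand is bounded and vanishes once `N ≥ Z₂`, so it is integrable (`integrableOn_hypVol`)
and the Bochner integral in the quadratic case has its proper meaning.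
-/

open NumberField NumberField.InfinitePlace MeasureTheory Classical Pointwise

noncomputable section

variable (K : Type*) [Field K] [NumberField K]

/-- Data of a region `D = ∏_{v ∣ ∞} D_v` where each `D_v ⊆ K_v²` is a compact ball of
positive radius. -/
structure BoxData where
  ctrR : {w : InfinitePlace K // w.IsReal} → ℝ × ℝ
  radR : {w : InfinitePlace K // w.IsReal} → ℝ
  ctrC : {w : InfinitePlace K // w.IsComplex} → ℂ × ℂ
  radC : {w : InfinitePlace K // w.IsComplex} → ℝ
  radR_pos : ∀ w, 0 < radR w
  radC_pos : ∀ w, 0 < radC w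

/-- The region `D ⊆ K_∞²` determined by the ball data. -/
def BoxData.D (B : BoxData K) : Set (KInfty K × KInfty K) :=
  {p | (∀ w, Real.sqrt ((p.1.1 w - (B.ctrR w).1) ^ 2 + (p.2.1 w - (B.ctrR w).2) ^ 2)
          ≤ B.radR w) ∧
       (∀ w, Real.sqrt (‖p.1.2 w - (B.ctrC w).1‖ ^ 2 + ‖p.2.2 w - (B.ctrC w).2‖ ^ 2)
          ≤ B.radC w)}

end

/-! ### Binary forms over a field -/

namespace VolR

section Forms

variable {k : Type*} [Field k]

/-- The dehomogenization `F(x, 1)` of a form of degree `d` has degree at most `d`. -/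
lemma natDegree_dehom_le {d : ℕ} {F : MvPolynomial (Fin 2) k} (hF : F.IsHomogeneous d) :
    (MvPolynomial.aeval (![Polynomial.X, 1] : Fin 2 → Polynomial k) F).natDegree ≤ d := by
  rw [MvPolynomial.aeval_def, MvPolynomial.eval₂_eq']
  refine Polynomial.natDegree_sum_le_of_forall_le _ _ fun m hm => ?_
  have hm' : m 0 + m 1 = d := by
    have := hF (MvPolynomial.mem_support_iff.mp hm)
    simpa [Finsupp.weight_apply, Finsupp.sum_fintype, Fin.sum_univ_two] using this
  rw [← Polynomial.C_eq_algebraMap]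
  refine (Polynomial.natDegree_C_mul_le _ _).trans ?_
  simp [Fin.prod_univ_two]
  omega

lemma eval_dehom (F : MvPolynomial (Fin 2) k) (x : k) :
    (MvPolynomial.aeval (![Polynomial.X, 1] : Fin 2 → Polynomial k) F).eval x
      = MvPolynomial.eval ![x, 1] F := by
  rw [MvPolynomial.aeval_def, ← Polynomial.coe_evalRingHom, MvPolynomial.hom_eval₂,
    MvPolynomial.eval, MvPolynomial.coe_eval₂Hom]
  congr 1
  · ext c; simp
  · ext i; fin_cases i <;> simp

lemma eval_smul_hom {d : ℕ} {F : MvPolynomial (Fin 2) k} (hF : F.IsHomogeneous d) (c s t : k) :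
    MvPolynomial.eval ![c * s, c * t] F = c ^ d * MvPolynomial.eval ![s, t] F := by
  rw [MvPolynomial.eval_eq', MvPolynomial.eval_eq', Finset.mul_sum]
  refine Finset.sum_congr rfl fun m hm => ?_
  have hm' : m 0 + m 1 = d := by
    have := hF (MvPolynomial.mem_support_iff.mp hm)
    simpa [Finsupp.weight_apply, Finsupp.sum_fintype, Fin.sum_univ_two] using this
  simp only [Fin.prod_univ_two, Matrix.cons_val_zero, Matrix.cons_val_one, mul_pow, ← hm', pow_add]
  ring

/-- A zero `(x₀ : 1)` of a form splits off the linear factor `X₀ - x₀ X₁`. -/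
lemma exists_factor {d : ℕ} {F : MvPolynomial (Fin 2) k} (hF : F.IsHomogeneous (d + 1)) (x₀ : k)
    (h0 : MvPolynomial.eval ![x₀, 1] F = 0) :
    ∃ G : MvPolynomial (Fin 2) k, G.IsHomogeneous d ∧
      F = (MvPolynomial.X 0 - MvPolynomial.C x₀ * MvPolynomial.X 1) * G := by
  obtain ⟨p, hp⟩ : ∃ p, MvPolynomial.aeval (![Polynomial.X, 1] : Fin 2 → Polynomial k) F = p :=
    ⟨_, rfl⟩
  have hd := natDegree_dehom_le hF
  rw [hp] at hd
  have hroot : p.IsRoot x₀ := by rw [Polynomial.IsRoot, ← hp, eval_dehom, h0]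
  obtain ⟨g, hg⟩ := Polynomial.dvd_iff_isRoot.mpr hroot
  have hgd : g.natDegree ≤ d := by
    by_cases hg0 : g = 0
    · simp [hg0]
    rw [hg, Polynomial.natDegree_mul (Polynomial.X_sub_C_ne_zero _) hg0,
      Polynomial.natDegree_X_sub_C] at hd
    omega
  refine ⟨g.homogenize d, Polynomial.isHomogeneous_homogenize g, ?_⟩
  have h1 : (Polynomial.X - Polynomial.C x₀ : Polynomial k).homogenize 1 =
      MvPolynomial.X 0 - MvPolynomial.C x₀ * MvPolynomial.X 1 := by
    rw [Polynomial.homogenize_sub]; simp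
  have h2 : p.homogenize (d + 1) = F := Polynomial.homogenize_eq_of_isHomogeneous hF hp
  have h3 := Polynomial.homogenize_mul (Polynomial.X - Polynomial.C x₀ : Polynomial k) g
    (Polynomial.natDegree_X_sub_C_le _) hgd
  rw [← hg, h1, add_comm 1 d, h2] at h3
  exact h3

lemma not_isUnit_of_hom {d : ℕ} (hd : d ≠ 0) {F : MvPolynomial (Fin 2) k} (hF : F.IsHomogeneous d) :
    ¬ IsUnit F := by
  intro h
  have h1 : IsUnit (MvPolynomial.eval ![0 * 0, 0 * 0] F) := h.map _
  rw [eval_smul_hom hF, zero_pow hd, zero_mul] at h1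
  exact not_isUnit_zero h1

/-- A form of degree one is `aX₀ + bX₁`. -/
lemma exists_linear {F : MvPolynomial (Fin 2) k} (hF : F.IsHomogeneous 1) :
    ∃ a b : k, F = MvPolynomial.C a * MvPolynomial.X 0 + MvPolynomial.C b * MvPolynomial.X 1 := by
  rw [← Polynomial.homogenize_eq_of_isHomogeneous hF rfl]
  set p := MvPolynomial.aeval (![Polynomial.X, 1] : Fin 2 → Polynomial k) F
  obtain ⟨a, b, h⟩ := Polynomial.exists_eq_X_add_C_of_natDegree_le_one (natDegree_dehom_le hF)
  refine ⟨a, b, ?_⟩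
  change p = _ at h
  rw [h]
  simp

lemma isHomogeneous_lin (a b : k) : (MvPolynomial.C a * MvPolynomial.X 0 +
    MvPolynomial.C b * MvPolynomial.X 1 : MvPolynomial (Fin 2) k).IsHomogeneous 1 := by
  refine MvPolynomial.IsHomogeneous.add ?_ ?_
  · simpa using (MvPolynomial.isHomogeneous_C (Fin 2) a).mul (MvPolynomial.isHomogeneous_X k (0 : Fin 2))
  · simpa using (MvPolynomial.isHomogeneous_C (Fin 2) b).mul (MvPolynomial.isHomogeneous_X k (1 : Fin 2))

lemma lin_ne_zero {F : MvPolynomial (Fin 2) k} (hF : Squarefree F) {a b : k}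
    (h : F = MvPolynomial.C a * MvPolynomial.X 0 + MvPolynomial.C b * MvPolynomial.X 1) :
    a ≠ 0 ∨ b ≠ 0 := by
  by_contra! hc
  apply hF.ne_zero
  rw [h, hc.1, hc.2]; simp

/-- The two linear factors of a squarefree quadratic form are linearly independent. -/
lemma det_ne_zero {a b c e : k}
    (h : Squarefree ((MvPolynomial.C a * MvPolynomial.X 0 + MvPolynomial.C b * MvPolynomial.X 1) *
      (MvPolynomial.C c * MvPolynomial.X 0 + MvPolynomial.C e * MvPolynomial.X 1) :
        MvPolynomial (Fin 2) k)) : a * e - b * c ≠ 0 := by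
  intro hdet
  set G : MvPolynomial (Fin 2) k :=
    MvPolynomial.C a * MvPolynomial.X 0 + MvPolynomial.C b * MvPolynomial.X 1 with hG
  have hG0 : a ≠ 0 ∨ b ≠ 0 := lin_ne_zero (h.squarefree_of_dvd (dvd_mul_right _ _)) rfl
  obtain ⟨l, hl1, hl2⟩ : ∃ l : k, c = l * a ∧ e = l * b := by
    rcases hG0 with h' | h'
    · refine ⟨c / a, by field_simp, ?_⟩
      field_simp
      linear_combination hdet
    · refine ⟨e / b, ?_, by field_simp⟩
      field_simp
      linear_combination -hdet
  refine not_isUnit_of_hom one_ne_zero (isHomogeneous_lin a b) (h G ⟨MvPolynomial.C l, ?_⟩)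
  rw [hl1, hl2, hG]
  simp only [map_mul]
  ring

/-- A squarefree form has only simple zeros on the affine line `t = 1`. -/
lemma simple_zero {d : ℕ} (hd : 1 ≤ d) {F : MvPolynomial (Fin 2) k} (hF : F.IsHomogeneous d)
    (hsq : Squarefree F) (x₀ : k) (h0 : MvPolynomial.eval ![x₀, 1] F = 0) :
    ∃ G : MvPolynomial (Fin 2) k, MvPolynomial.eval ![x₀, 1] G ≠ 0 ∧
      ∀ x, MvPolynomial.eval ![x, 1] F = (x - x₀) * MvPolynomial.eval ![x, 1] G := by
  obtain ⟨d, rfl⟩ : ∃ e, d = e + 1 := ⟨d - 1, by omega⟩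
  obtain ⟨G, hG, hFG⟩ := exists_factor hF x₀ h0
  have hlin : ¬ IsUnit (MvPolynomial.X 0 - MvPolynomial.C x₀ * MvPolynomial.X 1 :
      MvPolynomial (Fin 2) k) := by
    have := not_isUnit_of_hom one_ne_zero (isHomogeneous_lin (1 : k) (-x₀))
    simpa [sub_eq_add_neg] using this
  refine ⟨G, fun hG0 => ?_, fun x => by simp [hFG]⟩
  rcases d with _ | d
  · obtain ⟨c, hc⟩ : ∃ c, G = MvPolynomial.C c := ⟨_, (MvPolynomial.totalDegree_eq_zero_iff_eq_C).mp
      (by simpa using hG.totalDegree_le)⟩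
    rw [hc] at hG0
    simp at hG0
    apply hsq.ne_zero
    rw [hFG, hc, hG0]; simp
  · obtain ⟨G', -, hG'⟩ := exists_factor hG x₀ hG0
    exact hlin (hsq _ ⟨G', by rw [hFG, hG', mul_assoc]⟩)

/-- An irreducible binary form of degree two has no zero on the affine line `t = 1`. -/
lemma no_zero_of_irreducible {F : MvPolynomial (Fin 2) k} (hF : F.IsHomogeneous 2)
    (hirr : Irreducible F) (x₀ : k) : MvPolynomial.eval ![x₀, 1] F ≠ 0 := by
  intro h0
  obtain ⟨G, hG, hFG⟩ := exists_factor (d := 1) hF x₀ h0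
  have hlin : ¬ IsUnit (MvPolynomial.X 0 - MvPolynomial.C x₀ * MvPolynomial.X 1 :
      MvPolynomial (Fin 2) k) := by
    have := not_isUnit_of_hom one_ne_zero (isHomogeneous_lin (1 : k) (-x₀))
    simpa [sub_eq_add_neg] using this
  rcases hirr.isUnit_or_isUnit hFG with h | h
  · exact hlin h
  · exact not_isUnit_of_hom one_ne_zero hG h

/-- The form with the two variables exchanged. -/
noncomputable def swapForm (F : MvPolynomial (Fin 2) k) : MvPolynomial (Fin 2) k :=
  MvPolynomial.renameEquiv k (Equiv.swap (0 : Fin 2) 1) F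

lemma swapForm_eval (F : MvPolynomial (Fin 2) k) (s t : k) :
    MvPolynomial.eval ![s, t] (swapForm F) = MvPolynomial.eval ![t, s] F := by
  rw [swapForm, MvPolynomial.renameEquiv_apply, MvPolynomial.eval_rename]
  congr 2
  ext i; fin_cases i <;> simp

lemma swapForm_hom {d : ℕ} {F : MvPolynomial (Fin 2) k} (hF : F.IsHomogeneous d) :
    (swapForm F).IsHomogeneous d := by
  rw [swapForm, MvPolynomial.renameEquiv_apply]
  exact hF.rename_isHomogeneous

lemma swapForm_squarefree {F : MvPolynomial (Fin 2) k} (hF : Squarefree F) :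
    Squarefree (swapForm F) := by
  intro x hx
  set e := MvPolynomial.renameEquiv k (Equiv.swap (0 : Fin 2) 1)
  have h1 : e.symm x * e.symm x ∣ F := by
    have := map_dvd e.symm hx
    rwa [map_mul, swapForm, AlgEquiv.symm_apply_apply] at this
  have h2 := (hF _ h1).map e
  rwa [AlgEquiv.apply_symm_apply] at h2

lemma swapForm_irreducible {F : MvPolynomial (Fin 2) k} (hF : Irreducible F) :
    Irreducible (swapForm F) :=
  (MulEquiv.irreducible_iff (MvPolynomial.renameEquiv k (Equiv.swap (0 : Fin 2) 1))).mpr hF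

end Forms
end VolR

/-! ### Pushforwards under homogeneous functions -/

namespace VolR
open Set Filter Topology
open scoped NNReal ENNReal

section Pushforward

/-- A function whose sublevel sets have volume linear in the level pushes the measure
forward to a multiple of Lebesgue measure on the positive half-line. -/
lemma map_eq_of_sublevel {E : Type*} [MeasurableSpace E] (μ : Measure E) (f : E → ℝ)
    (hf : Measurable f) (κ : ℝ≥0)
    (h : ∀ y, 0 < y → μ {x | f x ≤ y} = κ * ENNReal.ofReal y) :
    μ.map f = κ • (volume.restrict (Ioi 0)) := by
  have hall : ∀ y, μ {x | f x ≤ y} = κ * ENNReal.ofReal y := by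
    intro y
    rcases lt_or_ge 0 y with hy | hy
    · exact h y hy
    · rw [ENNReal.ofReal_of_nonpos hy, mul_zero]
      have h2 : Tendsto (fun y : ℝ => (κ : ℝ≥0∞) * ENNReal.ofReal y) (𝓝[>] 0) (𝓝 (κ * ENNReal.ofReal 0)) := by
        refine ENNReal.Tendsto.const_mul ?_ (Or.inr ENNReal.coe_ne_top)
        exact (ENNReal.continuous_ofReal.tendsto 0).mono_left nhdsWithin_le_nhds
      rw [ENNReal.ofReal_zero, mul_zero] at h2
      refine le_antisymm (ge_of_tendsto h2 ?_) bot_le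
      filter_upwards [self_mem_nhdsWithin] with z hz
      rw [← h z hz]
      exact measure_mono fun x hx => le_trans hx (hy.trans (le_of_lt hz))
  have hIoc : ∀ a b : ℝ, a < b → μ.map f (Ioc a b) = (κ • volume.restrict (Ioi (0:ℝ))) (Ioc a b) := by
    intro a b hab
    rw [Measure.map_apply hf measurableSet_Ioc, Measure.smul_apply,
      Measure.restrict_apply measurableSet_Ioc]
    have h1 : f ⁻¹' (Ioc a b) = {x | f x ≤ b} \ {x | f x ≤ a} := by
      ext x; simp [and_comm]
    have h2 : {x | f x ≤ a} ⊆ {x | f x ≤ b} := fun x hx => le_trans hx hab.le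
    have h3 : NullMeasurableSet {x | f x ≤ a} μ := (hf measurableSet_Iic).nullMeasurableSet
    have h4 : μ {x | f x ≤ a} ≠ ∞ := by
      rw [hall]; exact ENNReal.mul_ne_top ENNReal.coe_ne_top ENNReal.ofReal_ne_top
    rw [h1, measure_sdiff h2 h3 h4, hall, hall,
      Ioc_inter_Ioi, Real.volume_Ioc, ENNReal.smul_def, smul_eq_mul,
      ← ENNReal.mul_sub (fun _ _ => ENNReal.coe_ne_top)]
    congr 1
    rcases le_total a 0 with ha | ha
    · rw [ENNReal.ofReal_of_nonpos ha, tsub_zero]; simp [ha]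
    · rw [← ENNReal.ofReal_sub _ ha]; simp [ha]
  refine Measure.ext_of_Ioc' _ _ (fun a b hab => ?_) hIoc
  rw [hIoc a b hab]
  exact measure_Ioc_lt_top.ne

/-- Homogeneous functions of degree equal to the dimension push Haar measure forward to a multiple
of Lebesgue measure. -/
lemma map_eq_of_scaling {E : Type*} [NormedAddCommGroup E] [NormedSpace ℝ E] [FiniteDimensional ℝ E]
    [MeasurableSpace E] [BorelSpace E] (μ : Measure E) [μ.IsAddHaarMeasure] (f : E → ℝ)
    (hf : Measurable f) (hN : 0 < Module.finrank ℝ E)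
    (hs : ∀ r : ℝ, 0 < r → ∀ x, f (r • x) = r ^ Module.finrank ℝ E * f x)
    (hfin : μ {x | f x ≤ 1} ≠ ∞) :
    ∃ κ : ℝ≥0, μ.map f = κ • (volume.restrict (Ioi 0)) := by
  refine ⟨(μ {x | f x ≤ 1}).toNNReal, map_eq_of_sublevel μ f hf _ fun y hy => ?_⟩
  rw [ENNReal.coe_toNNReal hfin]
  set r : ℝ := y ^ ((Module.finrank ℝ E : ℝ)⁻¹)
  have hr : 0 < r := Real.rpow_pos_of_pos hy _
  have hrN : r ^ Module.finrank ℝ E = y := Real.rpow_inv_natCast_pow hy.le hN.ne'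
  have h1 : {x | f x ≤ y} = r • {x | f x ≤ 1} := by
    ext x
    rw [mem_smul_set_iff_inv_smul_mem₀ hr.ne', mem_ofPred_eq, mem_ofPred_eq,
      hs _ (inv_pos.mpr hr), inv_pow, hrN, inv_mul_le_iff₀ hy, mul_one]
  rw [h1, Measure.addHaar_smul_of_nonneg _ hr.le, hrN, mul_comm]

end Pushforward

section Local

variable {𝕜 : Type*} [RCLike 𝕜]

local notation "mdeg" => Module.finrank ℝ 𝕜

lemma mdeg_pos : 0 < mdeg := Module.finrank_pos

/-- The value of a form at a point of `𝕜²`. -/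
noncomputable def ev (F : MvPolynomial (Fin 2) 𝕜) (p : 𝕜 × 𝕜) : 𝕜 :=
  MvPolynomial.eval ![p.1, p.2] F

lemma continuous_ev (F : MvPolynomial (Fin 2) 𝕜) : Continuous (ev F) := by
  unfold ev
  refine (MvPolynomial.continuous_eval F).comp ?_
  refine continuous_pi fun i => ?_
  fin_cases i <;> simp <;> fun_prop

variable [MeasureSpace 𝕜] [BorelSpace 𝕜]

lemma measurable_ev (F : MvPolynomial (Fin 2) 𝕜) : Measurable (ev F) :=
  (continuous_ev F).measurable

variable [(volume : Measure 𝕜).IsAddHaarMeasure]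

lemma haar_prod : (volume : Measure (𝕜 × 𝕜)).IsAddHaarMeasure := by
  rw [Measure.volume_eq_prod]; infer_instance

/-- On `𝕜`, of degree `m` over `ℝ`, the function `|x|^m` has sublevel sets of volume linear in the
level. -/
lemma map_norm_pow : ∃ κ : ℝ≥0, (volume : Measure 𝕜).map (fun x => ‖x‖ ^ mdeg) =
    κ • (volume.restrict (Ioi 0)) := by
  refine map_eq_of_scaling volume _ (by fun_prop) mdeg_pos
    (fun r hr x => by rw [norm_smul, mul_pow, Real.norm_of_nonneg hr.le]) ?_
  have : {x : 𝕜 | ‖x‖ ^ mdeg ≤ 1} ⊆ Metric.closedBall 0 1 := by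
    intro x hx
    rw [mem_closedBall_zero_iff]
    exact (pow_le_one_iff_of_nonneg (norm_nonneg _) mdeg_pos.ne').mp hx
  exact ((measure_mono this).trans_lt measure_closedBall_lt_top).ne

/-- The bound for the pushforward of the region `|F| ≥ 1` under `|F|^{2m/d}`, with a dummy second
coordinate `1`, for forms whose sublevel set `|F| ≤ 1` has finite volume. As `|F|^{2m/d}` is homogeneous of degree
`2m = dim 𝕜²`, its pushforward of Lebesgue measure is again a multiple of Lebesgue measure. -/
lemma local_bound_hom {d : ℕ} (hd : 0 < d) (F : MvPolynomial (Fin 2) 𝕜) (hF : F.IsHomogeneous d)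
    (hfin : (volume : Measure (𝕜 × 𝕜)) {p | ‖ev F p‖ ≤ 1} ≠ ∞) :
    ∃ κ : ℝ≥0, ((volume : Measure (𝕜 × 𝕜)).restrict {p | 1 ≤ ‖ev F p‖}).map
        (fun p => (((‖ev F p‖ ^ mdeg) ^ (2 / (d : ℝ)), 1) : ℝ × 𝕜)) ≤
      κ • (volume.restrict (Ici (1 : ℝ))).prod (Measure.dirac (1 : 𝕜)) := by
  have := haar_prod (𝕜 := 𝕜)
  have hd' : (0 : ℝ) < 2 / (d : ℝ) := by positivity
  have hmeas : Measurable fun p : 𝕜 × 𝕜 => (‖ev F p‖ ^ mdeg) ^ (2 / (d : ℝ)) :=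
    ((measurable_ev F).norm.pow_const _).pow_const _
  have hone : ∀ x : ℝ, 0 ≤ x → ((x ^ mdeg) ^ (2 / (d : ℝ)) ≤ 1 ↔ x ≤ 1) := fun x hx => by
    rw [← Real.one_rpow (2 / (d : ℝ)), Real.rpow_le_rpow_iff (by positivity) zero_le_one hd',
      pow_le_one_iff_of_nonneg hx mdeg_pos.ne', Real.one_rpow]
  obtain ⟨κ, hκ⟩ := map_eq_of_scaling (volume : Measure (𝕜 × 𝕜))
    (fun p => (‖ev F p‖ ^ mdeg) ^ (2 / (d : ℝ))) hmeas
    Module.finrank_pos (fun r hr x => by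
      have h1 : ev F (r • x) = (r : 𝕜) ^ d * ev F x := by
        have := eval_smul_hom hF (r : 𝕜) x.1 x.2
        simpa [ev, RCLike.real_smul_eq_coe_mul] using this
      rw [h1, norm_mul, norm_pow, RCLike.norm_ofReal, abs_of_pos hr, mul_pow,
        Real.mul_rpow (by positivity) (by positivity), Module.finrank_prod]
      congr 1
      rw [← pow_mul, ← Real.rpow_natCast, ← Real.rpow_mul hr.le, ← Real.rpow_natCast]
      congr 1
      push_cast
      field_simp
      ring) (by simpa only [hone _ (norm_nonneg _)] using hfin)
  refine ⟨κ, ?_⟩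
  have hset : {p : 𝕜 × 𝕜 | 1 ≤ ‖ev F p‖} =
      (fun p => (‖ev F p‖ ^ mdeg) ^ (2 / (d : ℝ))) ⁻¹' (Ici 1) := by
    ext p
    simp only [mem_ofPred_eq, mem_preimage, mem_Ici]
    rw [← Real.one_rpow (2 / (d : ℝ)), Real.rpow_le_rpow_iff zero_le_one (by positivity) hd',
      one_le_pow_iff_of_nonneg (norm_nonneg _) mdeg_pos.ne', Real.one_rpow]
  have h2 : ((volume : Measure (𝕜 × 𝕜)).restrict {p | 1 ≤ ‖ev F p‖}).map
      (fun p => (‖ev F p‖ ^ mdeg) ^ (2 / (d : ℝ))) = κ • volume.restrict (Ici (1 : ℝ)) := by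
    rw [hset, ← Measure.restrict_map hmeas measurableSet_Ici, hκ, Measure.restrict_smul,
      Measure.restrict_restrict measurableSet_Ici, inter_eq_left.mpr]
    exact Ici_subset_Ioi.mpr one_pos
  have h3 : (fun p : 𝕜 × 𝕜 => (((‖ev F p‖ ^ mdeg) ^ (2 / (d : ℝ)), 1) : ℝ × 𝕜)) =
      (fun y : ℝ => (y, (1 : 𝕜))) ∘ (fun p => (‖ev F p‖ ^ mdeg) ^ (2 / (d : ℝ))) := rfl
  rw [h3, ← Measure.map_map (by fun_prop) hmeas, h2, Measure.prod_dirac, Measure.map_smul]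

end Local
end VolR

/-! ### Finiteness of the volume of `|F| ≤ 1` -/

namespace VolR
open Set Filter Topology
open scoped NNReal ENNReal

section Finiteness

variable {𝕜 : Type*} [RCLike 𝕜]

local notation "mdeg" => Module.finrank ℝ 𝕜

/-- On the unit disc, the set where a squarefree form `F(x, 1)` has absolute value at most `δ` is
covered by boundedly many discs of radius `O(δ)`. -/
lemma exists_cover {d : ℕ} (hd : 1 ≤ d) {F : MvPolynomial (Fin 2) 𝕜} (hF : F.IsHomogeneous d)
    (hsq : Squarefree F) :
    ∃ (T : Finset 𝕜) (C : ℝ), 0 ≤ C ∧ ∀ δ : ℝ, 0 < δ → ∀ x : 𝕜, ‖x‖ ≤ 1 → ‖ev F (x, 1)‖ ≤ δ →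
      ∃ y ∈ T, ‖x - y‖ ≤ C * δ := by
  have key : ∃ (T : Finset 𝕜) (C : ℝ), 0 ≤ C ∧ ∀ δ : ℝ, 0 < δ → ∀ x ∈ Metric.closedBall (0 : 𝕜) 1,
      ‖ev F (x, 1)‖ ≤ δ → ∃ y ∈ T, ‖x - y‖ ≤ C * δ := by
    refine (isCompact_closedBall (0 : 𝕜) 1).induction_on
      (p := fun s => ∃ (T : Finset 𝕜) (C : ℝ), 0 ≤ C ∧ ∀ δ : ℝ, 0 < δ → ∀ x ∈ s,
        ‖ev F (x, 1)‖ ≤ δ → ∃ y ∈ T, ‖x - y‖ ≤ C * δ) ?_ ?_ ?_ ?_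
    · exact ⟨∅, 0, le_rfl, by simp⟩
    · rintro s t hst ⟨T, C, hC, h⟩
      exact ⟨T, C, hC, fun δ hδ x hx => h δ hδ x (hst hx)⟩
    · rintro s t ⟨T, C, hC, h⟩ ⟨T', C', hC', h'⟩
      refine ⟨T ∪ T', max C C', le_max_of_le_left hC, fun δ hδ x hx hxδ => ?_⟩
      rcases hx with hx | hx
      · obtain ⟨y, hy, hxy⟩ := h δ hδ x hx hxδ
        exact ⟨y, Finset.mem_union_left _ hy, hxy.trans (by gcongr; exact le_max_left _ _)⟩
      · obtain ⟨y, hy, hxy⟩ := h' δ hδ x hx hxδ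
        exact ⟨y, Finset.mem_union_right _ hy, hxy.trans (by gcongr; exact le_max_right _ _)⟩
    · intro x₀ _
      by_cases h0 : ev F (x₀, 1) = 0
      · obtain ⟨G, hG0, hG⟩ := simple_zero hd hF hsq x₀ h0
        have hcont : Continuous fun x : 𝕜 => ‖ev G (x, 1)‖ :=
          ((continuous_ev G).comp (by fun_prop)).norm
        set c := ‖ev G (x₀, 1)‖ / 2 with hc
        have hGpos : 0 < ‖ev G (x₀, 1)‖ := norm_pos_iff.mpr hG0
        have hcpos : 0 < c := by positivity
        have hev : ∀ᶠ x in 𝓝 x₀, c < ‖ev G (x, 1)‖ :=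
          hcont.continuousAt.eventually (lt_mem_nhds (half_lt_self hGpos))
        refine ⟨{x | c < ‖ev G (x, 1)‖}, mem_nhdsWithin_of_mem_nhds hev, {x₀}, c⁻¹, by positivity,
          fun δ hδ x hx hxδ => ⟨x₀, by simp, ?_⟩⟩
        have h1 : ev F (x, 1) = (x - x₀) * ev G (x, 1) := hG x
        rw [h1, norm_mul] at hxδ
        rw [inv_mul_eq_div, le_div_iff₀ hcpos]
        exact (mul_le_mul_of_nonneg_left (le_of_lt hx) (norm_nonneg _)).trans hxδ
      · have hcont : Continuous fun x : 𝕜 => ‖ev F (x, 1)‖ :=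
          ((continuous_ev F).comp (by fun_prop)).norm
        set c := ‖ev F (x₀, 1)‖ / 2 with hc
        have hFpos : 0 < ‖ev F (x₀, 1)‖ := norm_pos_iff.mpr h0
        have hcpos : 0 < c := by positivity
        have hev : ∀ᶠ x in 𝓝 x₀, c < ‖ev F (x, 1)‖ :=
          hcont.continuousAt.eventually (lt_mem_nhds (half_lt_self hFpos))
        refine ⟨{x | c < ‖ev F (x, 1)‖} ∩ Metric.ball x₀ 1, mem_nhdsWithin_of_mem_nhds
          (inter_mem hev (Metric.ball_mem_nhds _ one_pos)), {x₀}, c⁻¹, by positivity,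
          fun δ hδ x hx hxδ => ⟨x₀, by simp, ?_⟩⟩
        have h1 : ‖x - x₀‖ < 1 := by simpa [dist_eq_norm] using hx.2
        refine h1.le.trans ?_
        rw [inv_mul_eq_div, le_div_iff₀ hcpos, one_mul]
        exact (le_of_lt hx.1).trans hxδ
  obtain ⟨T, C, hC, h⟩ := key
  exact ⟨T, C, hC, fun δ hδ x hx => h δ hδ x (by simpa using hx)⟩

variable [MeasureSpace 𝕜] [BorelSpace 𝕜] [(volume : Measure 𝕜).IsAddHaarMeasure]

/-- The part `|s| ≤ |t|` of the sublevel set `|F| ≤ 1` has finite volume. For `|t| > 1` the slice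
at height `t` consists of `s` with `s / t` in `O(|t|^{-d})`-discs around the zeros of `F(x, 1)`; it
has volume `O(|t|^{(1-d)m}) = O(|t|^{-2m})`, which is integrable in `t`. -/
lemma finite_half {d : ℕ} (hd : 3 ≤ d) {F : MvPolynomial (Fin 2) 𝕜} (hF : F.IsHomogeneous d)
    (hsq : Squarefree F) :
    (volume : Measure (𝕜 × 𝕜)) {p | ‖p.1‖ ≤ ‖p.2‖ ∧ ‖ev F p‖ ≤ 1} < ∞ := by
  obtain ⟨T, C, hC, hT⟩ := exists_cover (by omega) hF hsq
  obtain ⟨κ, hκ⟩ := map_norm_pow (𝕜 := 𝕜)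
  set v : ℝ≥0∞ := (volume : Measure 𝕜) (Metric.closedBall 0 1) with hv
  have hvfin : v ≠ ∞ := measure_closedBall_lt_top.ne
  have hball : ∀ (x : 𝕜) (r : ℝ), 0 ≤ r →
      (volume : Measure 𝕜) (Metric.closedBall x r) = ENNReal.ofReal (r ^ mdeg) * v := by
    intro x r hr
    rw [Measure.addHaar_closedBall' _ _ hr]
  have hm : MeasurableSet {p : 𝕜 × 𝕜 | ‖p.1‖ ≤ ‖p.2‖ ∧ ‖ev F p‖ ≤ 1} :=
    (measurableSet_le measurable_fst.norm measurable_snd.norm).inter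
      (measurableSet_le (measurable_ev F).norm measurable_const)
  set A : ℝ := C ^ mdeg
  -- the slice at height `t` depends, up to a constant, only on `y = |t|^m`
  set g : ℝ → ℝ≥0∞ := fun y => if y ≤ 1 then v else
    T.card * (ENNReal.ofReal (A * y ^ (-2 : ℝ)) * v) with hg
  have hgm : Measurable g := by
    refine Measurable.ite measurableSet_Iic measurable_const ?_
    exact ((measurable_const.mul (measurable_id.pow_const _)).ennreal_ofReal.mul_const _).const_mul _
  have hslice : ∀ t : 𝕜, (volume : Measure 𝕜) {s : 𝕜 | ‖s‖ ≤ ‖t‖ ∧ ‖ev F (s, t)‖ ≤ 1} ≤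
      g (‖t‖ ^ mdeg) := by
    intro t
    rcases le_or_gt (‖t‖ ^ mdeg) 1 with ht | ht
    · simp only [hg, ht, if_true]
      rw [hv]
      refine measure_mono fun s hs => ?_
      rw [mem_closedBall_zero_iff]
      exact hs.1.trans ((pow_le_one_iff_of_nonneg (norm_nonneg _) mdeg_pos.ne').mp ht)
    · simp only [hg, not_le.mpr ht, if_false]
      have ht1 : 1 < ‖t‖ := (one_lt_pow_iff_of_nonneg (norm_nonneg _) mdeg_pos.ne').mp ht
      have htpos : 0 < ‖t‖ := one_pos.trans ht1
      have ht0 : t ≠ 0 := norm_pos_iff.mp htpos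
      have hsub : {s : 𝕜 | ‖s‖ ≤ ‖t‖ ∧ ‖ev F (s, t)‖ ≤ 1} ⊆
          ⋃ y ∈ T, Metric.closedBall (t * y) (C * (‖t‖ ^ 2)⁻¹) := by
        intro s hs
        have h1 : ev F (s, t) = t ^ d * ev F (s / t, 1) := by
          have := eval_smul_hom hF t (s / t) 1
          rw [mul_div_cancel₀ _ ht0, mul_one] at this
          exact this
        have h2 : ‖ev F (s / t, 1)‖ ≤ (‖t‖ ^ 3)⁻¹ := by
          have h3 := hs.2
          rw [h1, norm_mul, norm_pow] at h3
          rw [← one_div, le_div_iff₀' (by positivity)]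
          refine le_trans ?_ h3
          gcongr
          exact ht1.le
        obtain ⟨y, hy, hxy⟩ := hT _ (by positivity) (s / t)
          (by rw [norm_div]; exact div_le_one_of_le₀ hs.1 (norm_nonneg _)) h2
        refine mem_iUnion₂.mpr ⟨y, hy, ?_⟩
        rw [mem_closedBall_iff_norm]
        have h4 : s - t * y = t * (s / t - y) := by field_simp
        rw [h4, norm_mul]
        calc ‖t‖ * ‖s / t - y‖ ≤ ‖t‖ * (C * (‖t‖ ^ 3)⁻¹) := by gcongr
          _ = C * (‖t‖ ^ 2)⁻¹ := by field_simp
      refine (measure_mono hsub).trans ((measure_biUnion_finset_le _ _).trans ?_)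
      rw [← nsmul_eq_mul]
      refine Finset.sum_le_card_nsmul _ _ _ fun y _ => ?_
      rw [hball _ _ (by positivity)]
      gcongr
      rw [mul_pow, inv_pow, ← pow_mul, mul_comm 2, pow_mul, Real.rpow_neg (by positivity)]
      norm_cast
  rw [Measure.volume_eq_prod, Measure.prod_apply_symm hm]
  have h1 : ∫⁻ t : 𝕜, (volume : Measure 𝕜) ((fun s => (s, t)) ⁻¹'
      {p : 𝕜 × 𝕜 | ‖p.1‖ ≤ ‖p.2‖ ∧ ‖ev F p‖ ≤ 1}) ≤ ∫⁻ t : 𝕜, g (‖t‖ ^ mdeg) :=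
    lintegral_mono fun t => hslice t
  refine h1.trans_lt ?_
  rw [← lintegral_map hgm (by fun_prop : Measurable fun t : 𝕜 => ‖t‖ ^ mdeg), hκ,
    lintegral_smul_measure]
  refine ENNReal.mul_lt_top ENNReal.coe_lt_top ?_
  rw [← Ioc_union_Ioi_eq_Ioi (zero_le_one (α := ℝ))]
  refine (lintegral_union_le _ _ _).trans_lt (ENNReal.add_lt_top.mpr ⟨?_, ?_⟩)
  · rw [setLIntegral_congr_fun (g := fun _ => v) measurableSet_Ioc
      (fun y hy => by simp [hg, hy.2])]
    simp [hvfin.lt_top]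
  · rw [setLIntegral_congr_fun (g := fun y => T.card * (ENNReal.ofReal (A * y ^ (-2 : ℝ)) * v))
      measurableSet_Ioi (fun y hy => by simp [hg, not_le.mpr (mem_Ioi.mp hy)])]
    rw [lintegral_const_mul' _ _ (ENNReal.natCast_ne_top _), lintegral_mul_const' _ _ hvfin]
    refine ENNReal.mul_lt_top (ENNReal.natCast_lt_top _) (ENNReal.mul_lt_top ?_ hvfin.lt_top)
    have hint : IntegrableOn (fun y : ℝ => A * y ^ (-2 : ℝ)) (Ioi 1) :=
      (integrableOn_Ioi_rpow_of_lt (by norm_num) one_pos).const_mul A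
    exact hint.lintegral_lt_top

/-- The whole sublevel set is the union of two halves exchanged by swapping the variables. -/
lemma finite_sublevel {d : ℕ} (hd : 3 ≤ d) {F : MvPolynomial (Fin 2) 𝕜} (hF : F.IsHomogeneous d)
    (hsq : Squarefree F) :
    (volume : Measure (𝕜 × 𝕜)) {p | ‖ev F p‖ ≤ 1} ≠ ∞ := by
  have h1 := finite_half hd hF hsq
  have h2 := finite_half hd (swapForm_hom hF) (swapForm_squarefree hsq)
  have hsw : MeasurePreserving (Prod.swap : 𝕜 × 𝕜 → 𝕜 × 𝕜) volume volume :=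
    Measure.measurePreserving_swap
  have hm : MeasurableSet {p : 𝕜 × 𝕜 | ‖p.1‖ ≤ ‖p.2‖ ∧ ‖ev (swapForm F) p‖ ≤ 1} :=
    (measurableSet_le measurable_fst.norm measurable_snd.norm).inter
      (measurableSet_le (measurable_ev _).norm measurable_const)
  rw [← hsw.measure_preimage hm.nullMeasurableSet] at h2
  refine ((measure_mono ?_).trans_lt ((measure_union_le _ _).trans_lt
    (ENNReal.add_lt_top.mpr ⟨h1, h2⟩))).ne
  intro p hp
  rcases le_total ‖p.1‖ ‖p.2‖ with h | h
  · exact Or.inl ⟨h, hp⟩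
  · refine Or.inr ⟨h, ?_⟩
    have : ev (swapForm F) p.swap = ev F p := swapForm_eval F p.2 p.1
    rw [this]; exact hp

/-- An irreducible quadratic form has no nontrivial zero, so `|F(p)| ≥ c |p|²` for some `c > 0` and
the sublevel set is bounded. -/
lemma finite_sublevel_of_irreducible {F : MvPolynomial (Fin 2) 𝕜} (hF : F.IsHomogeneous 2)
    (hirr : Irreducible F) :
    (volume : Measure (𝕜 × 𝕜)) {p | ‖ev F p‖ ≤ 1} ≠ ∞ := by
  have hnz : ∀ p : 𝕜 × 𝕜, p ≠ 0 → ev F p ≠ 0 := by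
    rintro ⟨s, t⟩ hp h0
    by_cases ht : t = 0
    · have hs : s ≠ 0 := fun hs => hp (by rw [hs, ht]; rfl)
      refine no_zero_of_irreducible (swapForm_hom hF) (swapForm_irreducible hirr) 0 ?_
      rw [swapForm_eval]
      have := eval_smul_hom hF s 1 0
      rw [mul_one, mul_zero] at this
      rw [ev, ht] at h0
      change MvPolynomial.eval ![s, 0] F = 0 at h0
      rw [h0, eq_comm, mul_eq_zero] at this
      exact this.resolve_left (pow_ne_zero _ hs)
    · refine no_zero_of_irreducible hF hirr (s / t) ?_
      have := eval_smul_hom hF t (s / t) 1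
      rw [mul_div_cancel₀ _ ht, mul_one] at this
      change MvPolynomial.eval ![s, t] F = 0 at h0
      rw [h0, eq_comm, mul_eq_zero] at this
      exact this.resolve_left (pow_ne_zero _ ht)
  obtain ⟨p₀, hp₀, hmin⟩ := (isCompact_sphere (0 : 𝕜 × 𝕜) 1).exists_isMinOn
    ⟨(1, 0), by simp⟩ (continuous_ev F).norm.continuousOn
  have hc : 0 < ‖ev F p₀‖ := norm_pos_iff.mpr (hnz p₀ (by rintro rfl; simp at hp₀))
  set c := ‖ev F p₀‖
  have hsub : {p | ‖ev F p‖ ≤ 1} ⊆ Metric.closedBall (0 : 𝕜 × 𝕜) (√(c⁻¹)) := by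
    intro p hp
    rw [mem_closedBall_zero_iff]
    by_cases hp0 : p = 0
    · simp [hp0]
    have hn : 0 < ‖p‖ := norm_pos_iff.mpr hp0
    refine Real.le_sqrt_of_sq_le ?_
    have h1 := hmin (a := (‖p‖ : ℝ)⁻¹ • p) (by
      rw [mem_sphere_zero_iff_norm, norm_smul, norm_inv, norm_norm, inv_mul_cancel₀ hn.ne'])
    have h2 : ev F ((‖p‖ : ℝ)⁻¹ • p) = (((‖p‖ : ℝ)⁻¹ : ℝ) : 𝕜) ^ 2 * ev F p := by
      have := eval_smul_hom hF (((‖p‖ : ℝ)⁻¹ : ℝ) : 𝕜) p.1 p.2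
      simpa [ev, RCLike.real_smul_eq_coe_mul] using this
    simp only [mem_ofPred_eq] at h1 hp
    rw [h2, norm_mul, norm_pow, RCLike.norm_ofReal, abs_of_pos (inv_pos.mpr hn)] at h1
    have h3 : c ≤ (‖p‖⁻¹) ^ 2 := h1.trans (mul_le_of_le_one_right (by positivity) hp)
    rw [inv_pow] at h3
    rwa [le_inv_comm₀ (by positivity) hc]
  have := haar_prod (𝕜 := 𝕜)
  exact ((measure_mono hsub).trans_lt measure_closedBall_lt_top).ne

end Finiteness
end VolR

/-! ### Linear forms as coordinates -/

namespace VolR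
open Set Filter Topology
open scoped NNReal ENNReal

section Linear

variable {𝕜 : Type*} [RCLike 𝕜]

local notation "mdeg" => Module.finrank ℝ 𝕜

/-- The linear automorphism of `𝕜²` with the given invertible matrix. -/
noncomputable def linEquiv (a b c e : 𝕜) (h : a * e - b * c ≠ 0) : (𝕜 × 𝕜) ≃ₗ[𝕜] (𝕜 × 𝕜) where
  toFun p := (a * p.1 + b * p.2, c * p.1 + e * p.2)
  invFun p := ((a * e - b * c)⁻¹ * (e * p.1 - b * p.2), (a * e - b * c)⁻¹ * (a * p.2 - c * p.1))
  map_add' p q := by ext <;> simp <;> ring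
  map_smul' r p := by ext <;> simp <;> ring
  left_inv p := by
    ext
    · simp only; rw [inv_mul_eq_iff_eq_mul₀ h]; ring
    · simp only; rw [inv_mul_eq_iff_eq_mul₀ h]; ring
  right_inv p := by
    ext <;> simp only <;> apply mul_left_cancel₀ h <;> field_simp <;> ring

variable [MeasureSpace 𝕜] [BorelSpace 𝕜]

lemma measurable_linEquiv (a b c e : 𝕜) (h : a * e - b * c ≠ 0) :
    Measurable (linEquiv a b c e h) := by
  have : Measurable fun p : 𝕜 × 𝕜 => (a * p.1 + b * p.2, c * p.1 + e * p.2) := by fun_prop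
  exact this

variable [(volume : Measure 𝕜).IsAddHaarMeasure]

/-- Both sides are Haar measures, hence proportional; only the finiteness of the constant is used. -/
lemma map_linEquiv (a b c e : 𝕜) (h : a * e - b * c ≠ 0) : ∃ κ : ℝ≥0,
    (volume : Measure (𝕜 × 𝕜)).map (linEquiv a b c e h) = κ • volume := by
  have := haar_prod (𝕜 := 𝕜)
  let L : (𝕜 × 𝕜) ≃L[ℝ] (𝕜 × 𝕜) :=
    ((linEquiv a b c e h).restrictScalars ℝ).toContinuousLinearEquiv
  have h1 : ((volume : Measure (𝕜 × 𝕜)).map L).IsAddHaarMeasure := L.isAddHaarMeasure_map volume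
  exact ⟨_, Measure.isAddLeftInvariant_eq_smul ((volume : Measure (𝕜 × 𝕜)).map L) volume⟩

/-- The restriction of `map_norm_pow` to `|x| ≥ 1`. -/
lemma map_norm_pow_restrict : ∃ κ : ℝ≥0,
    ((volume : Measure 𝕜).restrict {x | 1 ≤ ‖x‖}).map (fun x => ‖x‖ ^ mdeg) =
    κ • (volume.restrict (Ici 1)) := by
  obtain ⟨κ, hκ⟩ := map_norm_pow (𝕜 := 𝕜)
  refine ⟨κ, ?_⟩
  have hset : {x : 𝕜 | 1 ≤ ‖x‖} = (fun x => ‖x‖ ^ mdeg) ⁻¹' (Ici 1) := by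
    ext x
    exact (one_le_pow_iff_of_nonneg (norm_nonneg _) mdeg_pos.ne').symm
  rw [hset, ← Measure.restrict_map (by fun_prop) measurableSet_Ici, hκ, Measure.restrict_smul,
      Measure.restrict_restrict measurableSet_Ici, inter_eq_left.mpr (Ici_subset_Ioi.mpr one_pos)]

/-- Pushing forward along an invertible linear map, then along `|·|^m` in the first coordinate. -/
lemma map_lin_restrict (a b c e : 𝕜) (h : a * e - b * c ≠ 0) : ∃ κ : ℝ≥0, ∀ V : Set 𝕜,
    MeasurableSet V →
    ((volume : Measure (𝕜 × 𝕜)).restrict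
      {p | 1 ≤ ‖a * p.1 + b * p.2‖ ∧ c * p.1 + e * p.2 ∈ V}).map
      (fun p => (‖a * p.1 + b * p.2‖ ^ mdeg, c * p.1 + e * p.2)) =
    κ • (volume.restrict (Ici (1 : ℝ))).prod (volume.restrict V) := by
  obtain ⟨κ, hκ⟩ := map_linEquiv a b c e h
  obtain ⟨κ', hκ'⟩ := map_norm_pow_restrict (𝕜 := 𝕜)
  refine ⟨κ * κ', fun V hV => ?_⟩
  have hU : MeasurableSet {x : 𝕜 | 1 ≤ ‖x‖} := measurableSet_le measurable_const measurable_norm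
  have hset : {p : 𝕜 × 𝕜 | 1 ≤ ‖a * p.1 + b * p.2‖ ∧ c * p.1 + e * p.2 ∈ V} =
      linEquiv a b c e h ⁻¹' ({x : 𝕜 | 1 ≤ ‖x‖} ×ˢ V) := rfl
  have hfun : (fun p : 𝕜 × 𝕜 => (‖a * p.1 + b * p.2‖ ^ mdeg, c * p.1 + e * p.2)) =
      Prod.map (fun x : 𝕜 => ‖x‖ ^ mdeg) id ∘ linEquiv a b c e h := rfl
  have hmeas := measurable_linEquiv a b c e h
  rw [hfun, ← Measure.map_map (by fun_prop) hmeas, hset,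
    ← Measure.restrict_map hmeas (hU.prod hV), hκ, Measure.restrict_smul, Measure.map_smul,
    Measure.volume_eq_prod, ← Measure.prod_restrict, ← Measure.map_prod_map _ _ (by fun_prop) measurable_id,
    hκ', Measure.map_id, Measure.prod_smul_left, smul_smul]

/-- Local bound for a quadratic form splitting into independent linear factors `G`, `H`: the
coordinates are `|G|^m` and `H`. -/
lemma local_bound_split (a b c e : 𝕜) (h : a * e - b * c ≠ 0) : ∃ κ : ℝ≥0,
    ((volume : Measure (𝕜 × 𝕜)).restrict
      {p | 1 ≤ ‖a * p.1 + b * p.2‖ ∧ 1 ≤ ‖c * p.1 + e * p.2‖}).map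
      (fun p => (‖a * p.1 + b * p.2‖ ^ mdeg, c * p.1 + e * p.2)) ≤
    κ • (volume.restrict (Ici (1 : ℝ))).prod (volume.restrict {x : 𝕜 | 1 ≤ ‖x‖}) := by
  obtain ⟨κ, hκ⟩ := map_lin_restrict a b c e h
  exact ⟨κ, (hκ {x | 1 ≤ ‖x‖} (measurableSet_le measurable_const measurable_norm)).le⟩

/-- Local bound for a linear form on a box of side `O(r)`: the form is completed to a coordinate
system by one of the two variables, which ranges over a ball of volume `O(r^m)`. -/
lemma local_bound_lin (a b : 𝕜) (h : a ≠ 0 ∨ b ≠ 0) (M : ℝ) : ∃ κ : ℝ≥0, ∀ r : ℝ≥0,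
    ((volume : Measure (𝕜 × 𝕜)).restrict
      {p | 1 ≤ ‖a * p.1 + b * p.2‖ ∧ ‖p.1‖ ≤ r * M ∧ ‖p.2‖ ≤ r * M}).map
      (fun p => ((‖a * p.1 + b * p.2‖ ^ mdeg, 1) : ℝ × 𝕜)) ≤
    (κ * r ^ mdeg) • (volume.restrict (Ici (1 : ℝ))).prod (Measure.dirac (1 : 𝕜)) := by
  obtain ⟨c, e, hdet, hce⟩ : ∃ c e : 𝕜, a * e - b * c ≠ 0 ∧
      ∀ p : 𝕜 × 𝕜, ∀ R : ℝ, ‖p.1‖ ≤ R → ‖p.2‖ ≤ R → ‖c * p.1 + e * p.2‖ ≤ R := by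
    rcases h with h | h
    · exact ⟨0, 1, by simpa using h, fun p R h1 h2 => by simpa using h2⟩
    · exact ⟨1, 0, by simpa using h, fun p R h1 h2 => by simpa using h1⟩
  obtain ⟨κ, hκ⟩ := map_lin_restrict a b c e hdet
  set v := ((volume : Measure 𝕜) (Metric.closedBall 0 |M|)).toNNReal with hv
  refine ⟨κ * v, fun r => ?_⟩
  have hvr : (volume : Measure 𝕜) (Metric.closedBall 0 (r * |M|)) = ((r ^ mdeg * v : ℝ≥0) : ℝ≥0∞) := by
    have hb := Measure.addHaar_closedBall_mul (volume : Measure 𝕜) 0 r.coe_nonneg (abs_nonneg M)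
    rw [hb, ENNReal.coe_mul, hv,
      ENNReal.coe_toNNReal measure_closedBall_lt_top.ne]
    congr 1
    rw [← NNReal.coe_pow, ENNReal.ofReal_coe_nnreal]
  have hfun : (fun p : 𝕜 × 𝕜 => ((‖a * p.1 + b * p.2‖ ^ mdeg, 1) : ℝ × 𝕜)) =
      (fun y : ℝ => (y, (1 : 𝕜))) ∘ Prod.fst ∘
        (fun p => (‖a * p.1 + b * p.2‖ ^ mdeg, c * p.1 + e * p.2)) := rfl
  rw [hfun, ← Measure.map_map (by fun_prop) (by fun_prop), ← Measure.map_map (by fun_prop) (by fun_prop),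
    Measure.prod_dirac, ← Measure.map_smul]
  refine Measure.map_mono ?_ (by fun_prop)
  refine (Measure.map_mono (Measure.map_mono (Measure.restrict_mono (s' := {p : 𝕜 × 𝕜 |
    1 ≤ ‖a * p.1 + b * p.2‖ ∧ c * p.1 + e * p.2 ∈ Metric.closedBall (0 : 𝕜) (r * |M|)}) ?_ le_rfl)
    (by fun_prop)) measurable_fst).trans (le_of_eq ?_)
  · intro p hp
    refine ⟨hp.1, ?_⟩
    rw [mem_closedBall_zero_iff]
    have : (r : ℝ) * M ≤ r * |M| := mul_le_mul_of_nonneg_left (le_abs_self _) r.2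
    exact (hce p _ hp.2.1 hp.2.2).trans this
  · rw [hκ _ Metric.isClosed_closedBall.measurableSet, Measure.map_smul, Measure.map_fst_prod,
      Measure.restrict_apply_univ, hvr]
    rw [show ((r ^ mdeg * v : ℝ≥0) : ℝ≥0∞) • (volume.restrict (Ici (1 : ℝ))) =
      (r ^ mdeg * v : ℝ≥0) • (volume.restrict (Ici (1 : ℝ))) from rfl, smul_smul]
    congr 1
    ring

end Linear
end VolR

/-! ### Products of measures and regrouping by places -/

namespace VolR
open Set Filter Topology
open scoped NNReal ENNReal

section Product

variable {ι : Type*} [Fintype ι] {α β : ι → Type*} [∀ i, MeasurableSpace (α i)]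
  [∀ i, MeasurableSpace (β i)]

lemma pi_mono {μ ν : ∀ i, Measure (α i)} [∀ i, SigmaFinite (μ i)] [∀ i, SigmaFinite (ν i)]
    (h : ∀ i, μ i ≤ ν i) : Measure.pi μ ≤ Measure.pi ν := by
  refine Measure.le_iff.mpr fun s hs => ?_
  have h1 : (Measure.pi μ).toOuterMeasure ≤ OuterMeasure.pi fun i => (ν i).toOuterMeasure := by
    refine OuterMeasure.le_pi.mpr fun t _ => ?_
    change Measure.pi μ (univ.pi t) ≤ _
    rw [Measure.pi_pi]
    exact Finset.prod_le_prod' fun i _ => h i (t i)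
  rw [Measure.pi, Measure.pi, toMeasure_apply _ _ hs, toMeasure_apply _ _ hs]
  have h2 := h1 s
  rw [Measure.coe_toOuterMeasure, Measure.pi, toMeasure_apply _ _ hs] at h2
  exact h2

lemma pi_smul {ν : ∀ i, Measure (α i)} [∀ i, SigmaFinite (ν i)] (c : ι → ℝ≥0) :
    Measure.pi (fun i => c i • ν i) = (∏ i, c i) • Measure.pi ν := by
  refine Measure.pi_eq fun s _ => ?_
  simp only [Measure.smul_apply, Measure.pi_pi, ENNReal.smul_def, smul_eq_mul,
    Finset.prod_mul_distrib, ENNReal.ofNNReal_finsetProd]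

/-- Comparisons of pushforward measures in each factor multiply to one on the product. -/
lemma pi_map_le {μ : ∀ i, Measure (α i)} {ν : ∀ i, Measure (β i)} [∀ i, SigmaFinite (μ i)]
    [∀ i, SigmaFinite (ν i)] (f : ∀ i, α i → β i) (hf : ∀ i, Measurable (f i)) (c : ι → ℝ≥0)
    (h : ∀ i, (μ i).map (f i) ≤ c i • ν i) :
    (Measure.pi μ).map (fun x i => f i (x i)) ≤ (∏ i, c i) • Measure.pi ν := by
  have : ∀ i, SigmaFinite ((μ i).map (f i)) := fun i => Measure.sigmaFinite_of_le _ (h i)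
  rw [Measure.pi_map_pi fun i => (hf i).aemeasurable, ← pi_smul]
  exact pi_mono h

end Product

section Rearrange

lemma measurePreserving_prodProdProdComm {A B A' B' : Type*} [MeasurableSpace A]
    [MeasurableSpace B] [MeasurableSpace A'] [MeasurableSpace B'] (μ : Measure A) (ν : Measure B)
    (μ' : Measure A') (ν' : Measure B') [SigmaFinite μ] [SigmaFinite ν] [SigmaFinite μ']
    [SigmaFinite ν'] :
    MeasurePreserving (fun p : (A × B) × (A' × B') => ((p.1.1, p.2.1), (p.1.2, p.2.2)))
      ((μ.prod ν).prod (μ'.prod ν')) ((μ.prod μ').prod (ν.prod ν')) := by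
  have s1 := measurePreserving_prodAssoc μ ν (μ'.prod ν')
  have s2 := (MeasurePreserving.id μ).prod (measurePreserving_prodAssoc ν μ' ν').symm
  have s3 := (MeasurePreserving.id μ).prod
    ((Measure.measurePreserving_swap (μ := ν) (ν := μ')).prod (MeasurePreserving.id ν'))
  have s4 := (MeasurePreserving.id μ).prod (measurePreserving_prodAssoc μ' ν ν')
  have s5 := (measurePreserving_prodAssoc μ μ' (ν.prod ν')).symm
  exact s5.comp (s4.comp (s3.comp (s2.comp s1)))

/-- Regrouping a pair of points of `a^R × b^C` and `a'^R × b'^C` place by place. -/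
def regroup {R C a b a' b' : Type*} (p : ((R → a) × (C → b)) × ((R → a') × (C → b'))) :
    (R → a × a') × (C → b × b') :=
  (fun w => (p.1.1 w, p.2.1 w), fun w => (p.1.2 w, p.2.2 w))

lemma measurePreserving_regroup {R C a b a' b' : Type*} [Fintype R] [Fintype C]
    [MeasurableSpace a] [MeasurableSpace b] [MeasurableSpace a'] [MeasurableSpace b']
    (μ : R → Measure a) (ν : C → Measure b) (μ' : R → Measure a') (ν' : C → Measure b')
    [∀ i, SigmaFinite (μ i)] [∀ i, SigmaFinite (ν i)] [∀ i, SigmaFinite (μ' i)]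
    [∀ i, SigmaFinite (ν' i)] :
    MeasurePreserving (regroup (R := R) (C := C) (a := a) (b := b) (a' := a') (b' := b'))
      (((Measure.pi μ).prod (Measure.pi ν)).prod ((Measure.pi μ').prod (Measure.pi ν')))
      ((Measure.pi fun i => (μ i).prod (μ' i)).prod (Measure.pi fun i => (ν i).prod (ν' i))) := by
  have s1 := measurePreserving_prodProdProdComm (Measure.pi μ) (Measure.pi ν) (Measure.pi μ')
    (Measure.pi ν')
  have s2 := ((measurePreserving_arrowProdEquivProdArrow a a' R μ μ').symm).prod
    ((measurePreserving_arrowProdEquivProdArrow b b' C ν ν').symm)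
  exact s2.comp s1

end Rearrange
end VolR

/-! ### From local comparisons to a global volume bound -/

namespace VolR
open Set Filter Topology
open scoped NNReal ENNReal

section Core

variable {R C : Type*} [Fintype R] [Fintype C]

/-- The volume of `{x : x_w ≥ 1, Z₁ ≤ N ∏ x_w < Z₂}`, for `x` indexed by the disjoint union of
`R` and `C`. -/
noncomputable def slice (R C : Type*) [Fintype R] [Fintype C] (Z₁ Z₂ N : ℝ) : ℝ≥0∞ :=
  volume {x : (R → ℝ) × (C → ℝ) | ((∀ w, 1 ≤ x.1 w) ∧ ∀ w, 1 ≤ x.2 w) ∧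
    Z₁ ≤ ((∏ w, x.1 w) * ∏ w, x.2 w) * N ∧ ((∏ w, x.1 w) * ∏ w, x.2 w) * N < Z₂}

/-- The quantity `∏_w |t_w|^{m_w}`. -/
noncomputable def tnorm (t : (R → ℝ) × (C → ℂ)) : ℝ := (∏ w, |t.1 w|) * ∏ w, ‖t.2 w‖ ^ 2

@[fun_prop]
lemma measurable_tnorm : Measurable (tnorm (R := R) (C := C)) := by
  unfold tnorm
  refine Measurable.mul ?_ ?_ <;> refine Finset.measurable_prod _ fun i _ => ?_ <;> fun_prop

/-- Local comparisons of pushforward measures at all places multiply to a global volume bound: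
the first coordinates of the local maps carry the size condition, and the second coordinates
become the variables of integration. -/
lemma volume_le_lintegral (AR : R → Set (ℝ × ℝ)) (AC : C → Set (ℂ × ℂ))
    (fR : R → ℝ × ℝ → ℝ × ℝ) (fC : C → ℂ × ℂ → ℝ × ℂ)
    (hfR : ∀ w, Measurable (fR w)) (hfC : ∀ w, Measurable (fC w))
    (τR : R → Measure ℝ) (τC : C → Measure ℂ) [∀ w, SigmaFinite (τR w)] [∀ w, SigmaFinite (τC w)]
    (cR : R → ℝ≥0) (cC : C → ℝ≥0)
    (hR : ∀ w, (volume.restrict (AR w)).map (fR w) ≤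
      cR w • (volume.restrict (Ici (1 : ℝ))).prod (τR w))
    (hC : ∀ w, (volume.restrict (AC w)).map (fC w) ≤
      cC w • (volume.restrict (Ici (1 : ℝ))).prod (τC w))
    (Z₁ Z₂ : ℝ) (S : Set (((R → ℝ) × (C → ℂ)) × ((R → ℝ) × (C → ℂ))))
    (hSR : ∀ p ∈ S, ∀ w, (p.1.1 w, p.2.1 w) ∈ AR w)
    (hSC : ∀ p ∈ S, ∀ w, (p.1.2 w, p.2.2 w) ∈ AC w)
    (hS : ∀ p ∈ S,
      Z₁ ≤ ((∏ w, (fR w (p.1.1 w, p.2.1 w)).1) * ∏ w, (fC w (p.1.2 w, p.2.2 w)).1) *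
        tnorm (fun w => (fR w (p.1.1 w, p.2.1 w)).2, fun w => (fC w (p.1.2 w, p.2.2 w)).2) ∧
      ((∏ w, (fR w (p.1.1 w, p.2.1 w)).1) * ∏ w, (fC w (p.1.2 w, p.2.2 w)).1) *
        tnorm (fun w => (fR w (p.1.1 w, p.2.1 w)).2, fun w => (fC w (p.1.2 w, p.2.2 w)).2) < Z₂) :
    volume S ≤ (((∏ w, cR w) * ∏ w, cC w : ℝ≥0) : ℝ≥0∞) *
      ∫⁻ t, slice R C Z₁ Z₂ (tnorm t) ∂((Measure.pi τR).prod (Measure.pi τC)) := by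
  set ρ : Measure ℝ := volume.restrict (Ici (1 : ℝ)) with hρ
  let Q : ((R → ℝ) × (C → ℝ)) × ((R → ℝ) × (C → ℂ)) → ℝ := fun y =>
    ((∏ w, y.1.1 w) * ∏ w, y.1.2 w) * tnorm y.2
  have hQ : Measurable Q := by
    refine Measurable.mul (Measurable.mul ?_ ?_) (by fun_prop) <;>
      refine Finset.measurable_prod _ fun i _ => ?_ <;> fun_prop
  let V : Set (((R → ℝ) × (C → ℝ)) × ((R → ℝ) × (C → ℂ))) := {y | Z₁ ≤ Q y ∧ Q y < Z₂}
  have hV : MeasurableSet V :=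
    (measurableSet_le measurable_const hQ).inter (measurableSet_lt hQ measurable_const)
  -- the inverse of the regrouping of coordinates
  let u : (R → ℝ × ℝ) × (C → ℝ × ℂ) → ((R → ℝ) × (C → ℝ)) × ((R → ℝ) × (C → ℂ)) := fun y =>
    ((fun w => (y.1 w).1, fun w => (y.2 w).1), (fun w => (y.1 w).2, fun w => (y.2 w).2))
  have hu : Measurable u := by fun_prop
  let Φ : (R → ℝ × ℝ) × (C → ℂ × ℂ) → (R → ℝ × ℝ) × (C → ℝ × ℂ) :=
    Prod.map (fun x w => fR w (x w)) (fun x w => fC w (x w))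
  have hΦ1 : Measurable fun (x : R → ℝ × ℝ) w => fR w (x w) := by
    exact measurable_pi_lambda _ fun w => (hfR w).comp (measurable_pi_apply w)
  have hΦ2 : Measurable fun (x : C → ℂ × ℂ) w => fC w (x w) := by
    exact measurable_pi_lambda _ fun w => (hfC w).comp (measurable_pi_apply w)
  have hΦ : Measurable Φ := hΦ1.prodMap hΦ2
  let A : Set ((R → ℝ × ℝ) × (C → ℂ × ℂ)) := univ.pi AR ×ˢ univ.pi AC
  have hreg := measurePreserving_regroup (R := R) (C := C) (fun _ => (volume : Measure ℝ))
    (fun _ => (volume : Measure ℂ)) (fun _ => (volume : Measure ℝ)) (fun _ => (volume : Measure ℂ))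
  have hreg2 := measurePreserving_regroup (fun _ : R => ρ) (fun _ : C => ρ) τR τC
  have hsub : S ⊆ regroup ⁻¹' (Φ ⁻¹' (u ⁻¹' V) ∩ A) := fun p hp =>
    ⟨hS p hp, fun w _ => hSR p hp w, fun w _ => hSC p hp w⟩
  have hmeas : ((volume : Measure ((R → ℝ × ℝ) × (C → ℂ × ℂ))).restrict A).map Φ ≤
      ((∏ w, cR w) * ∏ w, cC w) • ((Measure.pi fun w => ρ.prod (τR w)).prod
        (Measure.pi fun w => ρ.prod (τC w))) := by
    have e1 : (volume : Measure ((R → ℝ × ℝ) × (C → ℂ × ℂ))).restrict A =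
        (Measure.pi fun w => volume.restrict (AR w)).prod
          (Measure.pi fun w => volume.restrict (AC w)) := by
      rw [← Measure.restrict_pi_pi, ← Measure.restrict_pi_pi, Measure.prod_restrict]
      rfl
    rw [e1, ← Measure.map_prod_map _ _ hΦ1 hΦ2]
    refine (Measure.prod_mono (pi_map_le fR hfR cR hR) (pi_map_le fC hfC cC hC)).trans
      (le_of_eq ?_)
    rw [Measure.prod_smul_left, Measure.prod_smul_right, smul_smul]
  calc volume S ≤ volume (regroup ⁻¹' (Φ ⁻¹' (u ⁻¹' V) ∩ A)) := measure_mono hsub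
    _ ≤ (volume : Measure ((R → ℝ × ℝ) × (C → ℂ × ℂ))) (Φ ⁻¹' (u ⁻¹' V) ∩ A) := by
        have hmap : (volume : Measure (((R → ℝ) × (C → ℂ)) × ((R → ℝ) × (C → ℂ)))).map regroup =
            volume := hreg.map_eq
        have hle := Measure.le_map_apply (μ := volume) hreg.measurable.aemeasurable
          (Φ ⁻¹' (u ⁻¹' V) ∩ A)
        rwa [hmap] at hle
    _ ≤ ((volume : Measure ((R → ℝ × ℝ) × (C → ℂ × ℂ))).restrict A).map Φ (u ⁻¹' V) :=
        (Measure.le_restrict_apply _ _).trans (Measure.le_map_apply hΦ.aemeasurable _)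
    _ ≤ _ := hmeas _
    _ = (((∏ w, cR w) * ∏ w, cC w : ℝ≥0) : ℝ≥0∞) *
        (((Measure.pi fun _ : R => ρ).prod (Measure.pi fun _ : C => ρ)).prod
          ((Measure.pi τR).prod (Measure.pi τC))) V := by
        rw [Measure.smul_apply, ENNReal.smul_def, smul_eq_mul,
          ← hreg2.measure_preimage (hu hV).nullMeasurableSet]
        rfl
    _ = _ := by
        rw [Measure.prod_apply_symm hV]
        congr 1
        refine lintegral_congr fun t => ?_
        have e2 : (Measure.pi fun _ : R => ρ).prod (Measure.pi fun _ : C => ρ) =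
            (volume : Measure ((R → ℝ) × (C → ℝ))).restrict
              ((univ.pi fun _ => Ici 1) ×ˢ (univ.pi fun _ => Ici 1)) := by
          rw [hρ, ← Measure.restrict_pi_pi, ← Measure.restrict_pi_pi, Measure.prod_restrict]
          rfl
        have hm : Measurable fun x : (R → ℝ) × (C → ℝ) => (x, t) := by fun_prop
        rw [e2, Measure.restrict_apply (hm hV), slice]
        congr 1
        ext x
        simp only [mem_inter_iff, mem_preimage, mem_prod, Set.mem_pi, mem_univ, true_imp_iff, mem_Ici, V, Q,
          Set.mem_ofPred_eq]
        exact and_comm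

end Core
end VolR

/-! ### The hyperbolic volumes `I_q(T)` -/

namespace VolR
open Set Filter Topology
open scoped NNReal ENNReal

section Hyp

/-- The region whose volume is `I_q(T)`. -/
def hypSet (q : ℕ) (T : ℝ) : Set (Fin q → ℝ) := {x | (∀ i, 1 ≤ x i) ∧ ∏ i, x i < T}

lemma hypVol_eq (q : ℕ) (T : ℝ) : hypVol q T = (volume (hypSet q T)).toReal := rfl

lemma one_le_prod {ι : Type*} (s : Finset ι) {f : ι → ℝ} (h : ∀ i, 1 ≤ f i) :
    1 ≤ ∏ i ∈ s, f i :=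
  Finset.prod_induction f (1 ≤ ·) (fun _ _ => one_le_mul_of_one_le_of_one_le) le_rfl fun i _ => h i

lemma measurableSet_hypSet (q : ℕ) (T : ℝ) : MeasurableSet (hypSet q T) := by
  have h1 : MeasurableSet {x : Fin q → ℝ | ∀ i, 1 ≤ x i} := by
    rw [Set.ofPred_forall]
    exact MeasurableSet.iInter fun i => measurableSet_le measurable_const (measurable_pi_apply i)
  have h2 : MeasurableSet {x : Fin q → ℝ | ∏ i, x i < T} :=
    measurableSet_lt (Finset.measurable_prod _ fun i _ => measurable_pi_apply i) measurable_const
  exact h1.inter h2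

lemma hypSet_mono (q : ℕ) {T T' : ℝ} (h : T ≤ T') : hypSet q T ⊆ hypSet q T' :=
  fun _ hx => ⟨hx.1, hx.2.trans_le h⟩

/-- The hyperbolic region is contained in the cube `[1, T]^q`. -/
lemma hypSet_finite (q : ℕ) (T : ℝ) : volume (hypSet q T) ≠ ∞ := by
  have hsub : hypSet q T ⊆ Icc (fun _ => 1) (fun _ => T) := by
    intro x hx
    refine ⟨fun i => hx.1 i, fun i => le_of_lt (lt_of_le_of_lt ?_ hx.2)⟩
    rw [← Finset.mul_prod_erase _ _ (Finset.mem_univ i)]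
    have h1 : 1 ≤ ∏ j ∈ Finset.univ.erase i, x j := one_le_prod _ fun j => hx.1 j
    nlinarith [hx.1 i]
  exact ((measure_mono hsub).trans_lt isCompact_Icc.measure_lt_top).ne

lemma hypVol_mono (q : ℕ) : Monotone (hypVol q) := fun _ T' h =>
  ENNReal.toReal_mono (hypSet_finite q T') (measure_mono (hypSet_mono q h))

lemma hypVol_nonneg (q : ℕ) (T : ℝ) : 0 ≤ hypVol q T := ENNReal.toReal_nonneg

/-- No point of `[1, ∞)^q` has product of coordinates below `1`. -/
lemma hypVol_eq_zero (q : ℕ) {T : ℝ} (hT : T ≤ 1) : hypVol q T = 0 := by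
  have : hypSet q T = ∅ := by
    refine eq_empty_of_forall_notMem fun x hx => ?_
    have h1 : 1 ≤ ∏ j, x j := one_le_prod _ fun j => hx.1 j
    exact absurd (hx.2.trans_le hT) (not_lt.mpr h1)
  rw [hypVol_eq, this, measure_empty, ENNReal.toReal_zero]

lemma slice_eq {R C : Type*} [Fintype R] [Fintype C] {q : ℕ}
    (hq : Fintype.card R + Fintype.card C = q) {Z₁ Z₂ N : ℝ} (hZ : Z₁ ≤ Z₂) (hN : 0 < N) :
    slice R C Z₁ Z₂ N = ENNReal.ofReal (hypVol q (Z₂ * N⁻¹) - hypVol q (Z₁ * N⁻¹)) := by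
  have hZN : Z₁ * N⁻¹ ≤ Z₂ * N⁻¹ := by gcongr
  let σ : R ⊕ C ≃ Fin q := Fintype.equivFinOfCardEq (by rw [Fintype.card_sum, hq])
  have h1 := volume_measurePreserving_sumPiEquivProdPi_symm (fun _ : R ⊕ C => ℝ)
  have h2 := volume_measurePreserving_piCongrLeft (fun _ : Fin q => ℝ) σ
  have h3 := h2.comp h1
  set e := (MeasurableEquiv.piCongrLeft (fun _ : Fin q => ℝ) σ) ∘
    (MeasurableEquiv.sumPiEquivProdPi (fun _ : R ⊕ C => ℝ)).symm with he
  have heσ : ∀ x a, e x (σ a) = Sum.elim x.1 x.2 a := by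
    intro x a
    rw [he, Function.comp_apply, MeasurableEquiv.coe_piCongrLeft, Equiv.piCongrLeft_apply_apply]
    rcases a with a | a <;> rfl
  have hall : ∀ x, (∀ j, 1 ≤ e x j) ↔ (∀ w, 1 ≤ x.1 w) ∧ ∀ w, 1 ≤ x.2 w := by
    intro x
    rw [← σ.forall_congr_right, Sum.forall]
    simp only [heσ, Sum.elim_inl, Sum.elim_inr]
  have hprod : ∀ x, ∏ j, e x j = (∏ w, x.1 w) * ∏ w, x.2 w := by
    intro x
    rw [← σ.prod_comp, Fintype.prod_sum_type]
    simp only [heσ, Sum.elim_inl, Sum.elim_inr]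
  have hset : {x : (R → ℝ) × (C → ℝ) | ((∀ w, 1 ≤ x.1 w) ∧ ∀ w, 1 ≤ x.2 w) ∧
      Z₁ ≤ ((∏ w, x.1 w) * ∏ w, x.2 w) * N ∧ ((∏ w, x.1 w) * ∏ w, x.2 w) * N < Z₂} =
      e ⁻¹' (hypSet q (Z₂ * N⁻¹) \ hypSet q (Z₁ * N⁻¹)) := by
    ext x
    have hmem : ∀ T, e x ∈ hypSet q (T * N⁻¹) ↔ ((∀ w, 1 ≤ x.1 w) ∧ ∀ w, 1 ≤ x.2 w) ∧
        ((∏ w, x.1 w) * ∏ w, x.2 w) * N < T := by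
      intro T
      rw [← hall, ← hprod, ← lt_div_iff₀ hN, div_eq_mul_inv]
      rfl
    rw [mem_preimage, Set.mem_sdiff, hmem, hmem, Set.mem_ofPred_eq, ← not_lt]
    tauto
  rw [slice, hset, h3.measure_preimage
    ((measurableSet_hypSet _ _).diff (measurableSet_hypSet _ _)).nullMeasurableSet,
    measure_sdiff (hypSet_mono q hZN) (measurableSet_hypSet _ _).nullMeasurableSet
      (hypSet_finite _ _), hypVol_eq, hypVol_eq,
    ENNReal.ofReal_sub _ ENNReal.toReal_nonneg, ENNReal.ofReal_toReal (hypSet_finite _ _),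
    ENNReal.ofReal_toReal (hypSet_finite _ _)]

end Hyp
end VolR

/-! ### Global bounds in terms of `I_q` -/

namespace VolR
open Set Filter Topology
open scoped NNReal ENNReal

section Global

lemma pi_dirac {ι : Type*} [Fintype ι] {α : ι → Type*} [∀ i, MeasurableSpace (α i)]
    (a : ∀ i, α i) : Measure.pi (fun i => Measure.dirac (a i)) = Measure.dirac a := by
  refine Measure.pi_eq fun s hs => ?_
  rw [Measure.dirac_apply' _ (MeasurableSet.univ_pi hs)]
  simp only [Measure.dirac_apply' _ (hs _)]
  by_cases h : a ∈ univ.pi s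
  · rw [indicator_of_mem h]
    exact (Finset.prod_eq_one fun i _ => indicator_of_mem (h i (mem_univ i)) _).symm
  · rw [indicator_of_notMem h]
    simp only [Set.mem_pi, mem_univ, true_imp_iff, not_forall] at h
    obtain ⟨i, hi⟩ := h
    exact (Finset.prod_eq_zero (Finset.mem_univ i) (indicator_of_notMem hi _)).symm

variable {R C : Type*} [Fintype R] [Fintype C]

/-- Global bound when no place contributes an integration variable: all second coordinates are the
dummy value `1`. -/
lemma toReal_le_of_dirac {q : ℕ} (hq : Fintype.card R + Fintype.card C = q)
    (AR : R → Set (ℝ × ℝ)) (AC : C → Set (ℂ × ℂ)) (yR : R → ℝ × ℝ → ℝ) (yC : C → ℂ × ℂ → ℝ)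
    (hyR : ∀ w, Measurable (yR w)) (hyC : ∀ w, Measurable (yC w))
    (cR : R → ℝ≥0) (cC : C → ℝ≥0)
    (hR : ∀ w, (volume.restrict (AR w)).map (fun p => (yR w p, (1 : ℝ))) ≤
      cR w • (volume.restrict (Ici (1 : ℝ))).prod (Measure.dirac 1))
    (hC : ∀ w, (volume.restrict (AC w)).map (fun p => (yC w p, (1 : ℂ))) ≤
      cC w • (volume.restrict (Ici (1 : ℝ))).prod (Measure.dirac 1))
    {Z₁ Z₂ : ℝ} (hZ : Z₁ ≤ Z₂) (S : Set (((R → ℝ) × (C → ℂ)) × ((R → ℝ) × (C → ℂ))))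
    (hSR : ∀ p ∈ S, ∀ w, (p.1.1 w, p.2.1 w) ∈ AR w)
    (hSC : ∀ p ∈ S, ∀ w, (p.1.2 w, p.2.2 w) ∈ AC w)
    (hS : ∀ p ∈ S, Z₁ ≤ (∏ w, yR w (p.1.1 w, p.2.1 w)) * ∏ w, yC w (p.1.2 w, p.2.2 w) ∧
      (∏ w, yR w (p.1.1 w, p.2.1 w)) * ∏ w, yC w (p.1.2 w, p.2.2 w) < Z₂) :
    (volume S).toReal ≤
      (((∏ w, cR w) * ∏ w, cC w : ℝ≥0) : ℝ) * (hypVol q Z₂ - hypVol q Z₁) := by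
  have hone : tnorm (fun _ : R => (1 : ℝ), fun _ : C => (1 : ℂ)) = 1 := by simp [tnorm]
  have h := volume_le_lintegral AR AC (fun w p => (yR w p, 1)) (fun w p => (yC w p, 1))
    (fun w => (hyR w).prodMk measurable_const) (fun w => (hyC w).prodMk measurable_const)
    (fun _ => Measure.dirac 1) (fun _ => Measure.dirac 1) cR cC hR hC Z₁ Z₂ S hSR hSC
    (fun p hp => by simpa only [hone, mul_one] using hS p hp)
  rw [pi_dirac, pi_dirac, Measure.dirac_prod_dirac, lintegral_dirac, hone,
    slice_eq hq hZ one_pos, inv_one, mul_one, mul_one] at h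
  have hnn : 0 ≤ hypVol q Z₂ - hypVol q Z₁ := sub_nonneg.mpr (hypVol_mono q hZ)
  refine (ENNReal.toReal_mono (ENNReal.mul_ne_top ENNReal.coe_ne_top ENNReal.ofReal_ne_top) h).trans
    (le_of_eq ?_)
  rw [ENNReal.toReal_mul, ENNReal.toReal_ofReal hnn, ENNReal.coe_toReal]

/-- Extension of a tuple indexed by the places not satisfying `P` by the value `1`. -/
noncomputable def extendOne (P : R → Prop) (t : {w // ¬ P w} → ℝ) (w : R) : ℝ :=
  if h : P w then 1 else t ⟨w, h⟩

lemma measurable_extendOne {R : Type*} (P : R → Prop) : Measurable (extendOne P) := by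
  refine measurable_pi_lambda _ fun w => ?_
  unfold extendOne
  by_cases h : P w
  · simp only [h, dite_true]; exact measurable_const
  · simp only [h, dite_false]; exact measurable_pi_apply _

/-- Lebesgue measure on `|t| ≥ 1`, or the unit mass at `1` where `P` holds. -/
noncomputable def mixedMeasure (P : R → Prop) (w : R) : Measure ℝ :=
  if P w then Measure.dirac 1 else volume.restrict {t | 1 ≤ |t|}

instance (P : R → Prop) (w : R) : SigmaFinite (mixedMeasure P w) := by
  unfold mixedMeasure
  split_ifs <;> infer_instance

/-- Integrating against the product of the measures `mixedMeasure P w` amounts to integrating over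
the coordinates where `P` fails, the other coordinates being set to `1`. -/
lemma pi_mixedMeasure (P : R → Prop) : Measure.pi (mixedMeasure P) =
    ((volume : Measure ({w // ¬ P w} → ℝ)).restrict {t | ∀ w, 1 ≤ |t w|}).map (extendOne P) := by
  refine Measure.pi_eq fun s hs => ?_
  have hset : {t : {w // ¬ P w} → ℝ | ∀ w, 1 ≤ |t w|} = univ.pi fun _ => {t | 1 ≤ |t|} := by
    ext t; simp
  rw [Measure.map_apply (measurable_extendOne P) (MeasurableSet.univ_pi hs), hset, volume_pi,
    Measure.restrict_pi_pi, ← Fintype.prod_subtype_mul_prod_subtype P]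
  have h2 : ∀ w : {w // ¬ P w}, mixedMeasure P w.1 (s w.1) =
      (volume : Measure ℝ).restrict {t | 1 ≤ |t|} (s w.1) := fun w => by
    rw [mixedMeasure, if_neg w.2]
  have h1 : ∀ w : {w // P w}, mixedMeasure P w.1 (s w.1) = (s w.1).indicator 1 1 := fun w => by
    rw [mixedMeasure, if_pos w.2, Measure.dirac_apply' _ (hs _)]
  simp only [h1, h2]
  by_cases h : ∀ w : {w // P w}, (1 : ℝ) ∈ s w.1
  · have hpre : extendOne P ⁻¹' (univ.pi s) = univ.pi fun w : {w // ¬ P w} => s w.1 := by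
      ext t
      simp only [mem_preimage, Set.mem_pi, mem_univ, true_imp_iff]
      constructor
      · intro ht w
        have := ht w.1
        rwa [extendOne, dif_neg w.2] at this
      · intro ht w
        rw [extendOne]
        split_ifs with hw
        · exact h ⟨w, hw⟩
        · exact ht ⟨w, hw⟩
    rw [hpre, Measure.pi_pi, Finset.prod_eq_one fun w _ => indicator_of_mem (h w) _, one_mul]
  · push Not at h
    obtain ⟨w, hw⟩ := h
    have hpre : extendOne P ⁻¹' (univ.pi s) = ∅ := by
      refine eq_empty_of_forall_notMem fun t ht => hw ?_
      have := ht w.1 (mem_univ _)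
      rwa [extendOne, dif_pos w.2] at this
    rw [hpre, measure_empty, Finset.prod_eq_zero (Finset.mem_univ w) (indicator_of_notMem hw _),
      zero_mul]

lemma tnorm_extendOne (P : R → Prop) (t : ({w // ¬ P w} → ℝ) × (C → ℂ)) :
    tnorm (extendOne P t.1, t.2) = tnorm t := by
  unfold tnorm
  congr 1
  rw [← Fintype.prod_subtype_mul_prod_subtype P]
  have h1 : ∀ w : {w // P w}, |extendOne P t.1 w.1| = 1 := fun w => by
    rw [extendOne, dif_pos w.2, abs_one]
  have h2 : ∀ w : {w // ¬ P w}, |extendOne P t.1 w.1| = |t.1 w| := fun w => by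
    rw [extendOne, dif_neg w.2]
  simp only [h1, h2, Finset.prod_const_one, one_mul]

lemma measurableSet_one_le : MeasurableSet {t : (R → ℝ) × (C → ℂ) |
    (∀ w, 1 ≤ |t.1 w|) ∧ ∀ w, 1 ≤ ‖t.2 w‖} := by
  have h1 : MeasurableSet {t : (R → ℝ) × (C → ℂ) | ∀ w, 1 ≤ |t.1 w|} := by
    rw [Set.ofPred_forall]
    exact MeasurableSet.iInter fun i => measurableSet_le measurable_const (by fun_prop)
  have h2 : MeasurableSet {t : (R → ℝ) × (C → ℂ) | ∀ w, 1 ≤ ‖t.2 w‖} := by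
    rw [Set.ofPred_forall]
    exact MeasurableSet.iInter fun i => measurableSet_le measurable_const (by fun_prop)
  exact h1.inter h2

lemma one_le_tnorm {t : (R → ℝ) × (C → ℂ)} (h : (∀ w, 1 ≤ |t.1 w|) ∧ ∀ w, 1 ≤ ‖t.2 w‖) :
    1 ≤ tnorm t :=
  one_le_mul_of_one_le_of_one_le (one_le_prod _ h.1) (one_le_prod _ fun w => one_le_pow₀ (h.2 w))

lemma le_tnorm {t : (R → ℝ) × (C → ℂ)} (h : (∀ w, 1 ≤ |t.1 w|) ∧ ∀ w, 1 ≤ ‖t.2 w‖) :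
    (∀ w, |t.1 w| ≤ tnorm t) ∧ ∀ w, ‖t.2 w‖ ≤ tnorm t := by
  have hR : 1 ≤ ∏ w, |t.1 w| := one_le_prod _ h.1
  have hC : 1 ≤ ∏ w, ‖t.2 w‖ ^ 2 := one_le_prod _ fun w => one_le_pow₀ (h.2 w)
  refine ⟨fun w => ?_, fun w => ?_⟩
  · have h1 : |t.1 w| ≤ ∏ w, |t.1 w| := by
      rw [← Finset.mul_prod_erase _ _ (Finset.mem_univ w)]
      exact le_mul_of_one_le_right (abs_nonneg _) (one_le_prod _ h.1)
    exact h1.trans (le_mul_of_one_le_right (by positivity) hC)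
  · have h1 : ‖t.2 w‖ ≤ ∏ w, ‖t.2 w‖ ^ 2 := by
      rw [← Finset.mul_prod_erase _ _ (Finset.mem_univ w)]
      exact (le_self_pow₀ (h.2 w) two_ne_zero).trans (le_mul_of_one_le_right (by positivity)
        (one_le_prod _ fun w => one_le_pow₀ (h.2 w)))
    exact h1.trans (le_mul_of_one_le_left (by positivity) hR)

/-- The integrand of the bound for quadratic forms is integrable: it is bounded, and vanishes
as soon as `∏ |t_w|^{m_w} ≥ Z₂`. -/
lemma integrableOn_hypVol (q : ℕ) {Z₁ Z₂ : ℝ} (hZ₁ : 0 ≤ Z₁) (hZ : Z₁ ≤ Z₂) :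
    IntegrableOn (fun t : (R → ℝ) × (C → ℂ) =>
      hypVol q (Z₂ * (tnorm t)⁻¹) - hypVol q (Z₁ * (tnorm t)⁻¹))
      {t | (∀ w, 1 ≤ |t.1 w|) ∧ ∀ w, 1 ≤ ‖t.2 w‖} := by
  have hZ₂ : 0 ≤ Z₂ := hZ₁.trans hZ
  have hmeas : Measurable (fun t : (R → ℝ) × (C → ℂ) =>
      hypVol q (Z₂ * (tnorm t)⁻¹) - hypVol q (Z₁ * (tnorm t)⁻¹)) :=
    ((hypVol_mono q).measurable.comp (by fun_prop)).sub
      ((hypVol_mono q).measurable.comp (by fun_prop))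
  have hle : ∀ t ∈ {t : (R → ℝ) × (C → ℂ) | (∀ w, 1 ≤ |t.1 w|) ∧ ∀ w, 1 ≤ ‖t.2 w‖},
      ∀ Z, 0 ≤ Z → Z ≤ Z₂ → hypVol q (Z * (tnorm t)⁻¹) ≤ hypVol q Z₂ := by
    intro t ht Z hZ0 hZZ
    exact hypVol_mono q ((mul_le_of_le_one_right hZ0 (inv_le_one_of_one_le₀ (one_le_tnorm ht))).trans hZZ)
  refine IntegrableOn.of_forall_sdiff_eq_zero
    (s := {t : (R → ℝ) × (C → ℂ) | (∀ w, 1 ≤ |t.1 w|) ∧ ∀ w, 1 ≤ ‖t.2 w‖} ∩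
      Metric.closedBall 0 Z₂) ?_ measurableSet_one_le ?_
  · refine IntegrableOn.of_bound ?_ hmeas.aestronglyMeasurable (hypVol q Z₂) ?_
    · exact (measure_mono inter_subset_right).trans_lt
        (isCompact_closedBall _ _).measure_lt_top
    · refine (ae_restrict_iff' (measurableSet_one_le.inter
        Metric.isClosed_closedBall.measurableSet)).mpr (ae_of_all _ fun t ht => ?_)
      have h1 := hle t ht.1 Z₁ hZ₁ hZ
      have h2 := hle t ht.1 Z₂ hZ₂ le_rfl
      have h3 := hypVol_nonneg q (Z₁ * (tnorm t)⁻¹)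
      have h4 := hypVol_nonneg q (Z₂ * (tnorm t)⁻¹)
      rw [Real.norm_eq_abs, abs_le]
      constructor <;> linarith
  · rintro t ⟨ht, ht'⟩
    have hN := one_le_tnorm ht
    have hlarge : Z₂ ≤ tnorm t := by
      by_contra! hlt
      refine ht' ⟨ht, ?_⟩
      rw [mem_closedBall_zero_iff, Prod.norm_def, max_le_iff, pi_norm_le_iff_of_nonneg hZ₂,
        pi_norm_le_iff_of_nonneg hZ₂]
      exact ⟨fun w => ((le_tnorm ht).1 w).trans hlt.le, fun w => ((le_tnorm ht).2 w).trans hlt.le⟩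
    have hinv : 0 < tnorm t := by linarith
    rw [hypVol_eq_zero, hypVol_eq_zero, sub_zero]
    · rw [← div_eq_mul_inv, div_le_one hinv]; exact hZ.trans hlarge
    · rw [← div_eq_mul_inv, div_le_one hinv]; exact hlarge

/-- Global bound for quadratic forms: the complex places and the real places where `P` fails each
contribute one integration variable. -/
lemma toReal_le_of_mixed {q : ℕ} (hq : Fintype.card R + Fintype.card C = q) (P : R → Prop)
    (AR : R → Set (ℝ × ℝ)) (AC : C → Set (ℂ × ℂ))
    (fR : R → ℝ × ℝ → ℝ × ℝ) (fC : C → ℂ × ℂ → ℝ × ℂ)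
    (hfR : ∀ w, Measurable (fR w)) (hfC : ∀ w, Measurable (fC w))
    (cR : R → ℝ≥0) (cC : C → ℝ≥0)
    (hR : ∀ w, (volume.restrict (AR w)).map (fR w) ≤
      cR w • (volume.restrict (Ici (1 : ℝ))).prod (mixedMeasure P w))
    (hC : ∀ w, (volume.restrict (AC w)).map (fC w) ≤
      cC w • (volume.restrict (Ici (1 : ℝ))).prod (volume.restrict {t | 1 ≤ ‖t‖}))
    {Z₁ Z₂ : ℝ} (hZ₁ : 0 ≤ Z₁) (hZ : Z₁ ≤ Z₂)
    (S : Set (((R → ℝ) × (C → ℂ)) × ((R → ℝ) × (C → ℂ))))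
    (hSR : ∀ p ∈ S, ∀ w, (p.1.1 w, p.2.1 w) ∈ AR w)
    (hSC : ∀ p ∈ S, ∀ w, (p.1.2 w, p.2.2 w) ∈ AC w)
    (hS : ∀ p ∈ S,
      Z₁ ≤ ((∏ w, (fR w (p.1.1 w, p.2.1 w)).1) * ∏ w, (fC w (p.1.2 w, p.2.2 w)).1) *
        tnorm (fun w => (fR w (p.1.1 w, p.2.1 w)).2, fun w => (fC w (p.1.2 w, p.2.2 w)).2) ∧
      ((∏ w, (fR w (p.1.1 w, p.2.1 w)).1) * ∏ w, (fC w (p.1.2 w, p.2.2 w)).1) *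
        tnorm (fun w => (fR w (p.1.1 w, p.2.1 w)).2, fun w => (fC w (p.1.2 w, p.2.2 w)).2) < Z₂) :
    (volume S).toReal ≤ (((∏ w, cR w) * ∏ w, cC w : ℝ≥0) : ℝ) *
      ∫ t in {t : ({w // ¬ P w} → ℝ) × (C → ℂ) | (∀ w, 1 ≤ |t.1 w|) ∧ ∀ w, 1 ≤ ‖t.2 w‖},
        (hypVol q (Z₂ * (tnorm t)⁻¹) - hypVol q (Z₁ * (tnorm t)⁻¹)) := by
  have h := volume_le_lintegral AR AC fR fC hfR hfC (mixedMeasure P)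
    (fun _ => volume.restrict {t | 1 ≤ ‖t‖}) cR cC hR hC Z₁ Z₂ S hSR hSC hS
  set T := {t : ({w // ¬ P w} → ℝ) × (C → ℂ) | (∀ w, 1 ≤ |t.1 w|) ∧ ∀ w, 1 ≤ ‖t.2 w‖} with hT
  have hnn : ∀ t ∈ T, 0 ≤ hypVol q (Z₂ * (tnorm t)⁻¹) - hypVol q (Z₁ * (tnorm t)⁻¹) := by
    intro t ht
    have := one_le_tnorm ht
    exact sub_nonneg.mpr (hypVol_mono q (by gcongr))
  have hmeasure : (Measure.pi (mixedMeasure P)).prod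
      (Measure.pi fun _ : C => (volume : Measure ℂ).restrict {t | 1 ≤ ‖t‖}) =
      ((volume : Measure (({w // ¬ P w} → ℝ) × (C → ℂ))).restrict T).map
        (Prod.map (extendOne P) id) := by
    have hset : {t : C → ℂ | ∀ w, 1 ≤ ‖t w‖} = univ.pi fun _ => {t | 1 ≤ ‖t‖} := by
      ext t; simp
    have hT' : T = {t : {w // ¬ P w} → ℝ | ∀ w, 1 ≤ |t w|} ×ˢ {t : C → ℂ | ∀ w, 1 ≤ ‖t w‖} := rfl
    rw [pi_mixedMeasure, ← Measure.restrict_pi_pi, ← hset, hT', Measure.volume_eq_prod,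
      ← Measure.prod_restrict, ← Measure.map_prod_map _ _ (measurable_extendOne P) measurable_id,
      Measure.map_id]
    rfl
  have hint : ∫⁻ t, slice R C Z₁ Z₂ (tnorm t) ∂((Measure.pi (mixedMeasure P)).prod
      (Measure.pi fun _ : C => (volume : Measure ℂ).restrict {t | 1 ≤ ‖t‖})) ≤
      ENNReal.ofReal (∫ t in T, (hypVol q (Z₂ * (tnorm t)⁻¹) - hypVol q (Z₁ * (tnorm t)⁻¹))) := by
    rw [hmeasure, ofReal_integral_eq_lintegral_ofReal (integrableOn_hypVol q hZ₁ hZ)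
      ((ae_restrict_iff' measurableSet_one_le).mpr (ae_of_all _ hnn))]
    refine (lintegral_map_le _ _).trans (le_of_eq ?_)
    refine setLIntegral_congr_fun measurableSet_one_le fun t ht => ?_
    have hpos : 0 < tnorm t := one_pos.trans_le (one_le_tnorm ht)
    change slice R C Z₁ Z₂ (tnorm (extendOne P t.1, t.2)) = _
    rw [tnorm_extendOne, slice_eq hq hZ hpos]
  have hnn' : 0 ≤ ∫ t in T, (hypVol q (Z₂ * (tnorm t)⁻¹) - hypVol q (Z₁ * (tnorm t)⁻¹)) :=
    setIntegral_nonneg measurableSet_one_le hnn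
  refine (ENNReal.toReal_mono (ENNReal.mul_ne_top ENNReal.coe_ne_top ENNReal.ofReal_ne_top)
    (h.trans (mul_le_mul_right hint _))).trans (le_of_eq ?_)
  rw [ENNReal.toReal_mul, ENNReal.toReal_ofReal hnn', ENNReal.coe_toReal]

end Global
end VolR

/-! ### The regions `R_i(X; Z₁, Z₂)` -/

namespace VolR
open Set Filter Topology
open scoped NNReal ENNReal

section LocalForms

lemma ev_lin {𝕜 : Type*} [RCLike 𝕜] (a b : 𝕜) (p : 𝕜 × 𝕜) :
    ev (MvPolynomial.C a * MvPolynomial.X 0 + MvPolynomial.C b * MvPolynomial.X 1) p =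
      a * p.1 + b * p.2 := by
  simp [ev]

variable {𝕜 : Type*} [RCLike 𝕜] [MeasureSpace 𝕜] [BorelSpace 𝕜]
  [(volume : Measure 𝕜).IsAddHaarMeasure]

local notation "mdeg" => Module.finrank ℝ 𝕜

/-- Local bound at a place for a nonzero form of degree one; squarefreeness only serves to exclude
the zero form. -/
lemma local_linear {F : MvPolynomial (Fin 2) 𝕜} (hF : F.IsHomogeneous 1) (hsq : Squarefree F)
    (M : ℝ) : ∃ κ : ℝ≥0, ∀ r : ℝ≥0,
    ((volume : Measure (𝕜 × 𝕜)).restrict {p | 1 ≤ ‖ev F p‖ ∧ ‖p.1‖ ≤ r * M ∧ ‖p.2‖ ≤ r * M}).map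
      (fun p => ((‖ev F p‖ ^ mdeg, 1) : ℝ × 𝕜)) ≤
    (κ * r ^ mdeg) • (volume.restrict (Ici (1 : ℝ))).prod (Measure.dirac (1 : 𝕜)) := by
  obtain ⟨a, b, h⟩ := exists_linear hF
  obtain ⟨κ, hκ⟩ := local_bound_lin a b (lin_ne_zero hsq h) M
  refine ⟨κ, fun r => ?_⟩
  simpa only [h, ev_lin] using hκ r

/-- Local bound at a place where a quadratic form splits as `G * H`; squarefreeness makes `G` and
`H` linearly independent, so that they are coordinates on `𝕜²`. -/
lemma local_split {G H : MvPolynomial (Fin 2) 𝕜} (hG : G.IsHomogeneous 1) (hH : H.IsHomogeneous 1)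
    (hsq : Squarefree (G * H)) : ∃ κ : ℝ≥0,
    ((volume : Measure (𝕜 × 𝕜)).restrict {p | 1 ≤ ‖ev G p‖ ∧ 1 ≤ ‖ev H p‖}).map
      (fun p => (‖ev G p‖ ^ mdeg, ev H p)) ≤
    κ • (volume.restrict (Ici (1 : ℝ))).prod (volume.restrict {x : 𝕜 | 1 ≤ ‖x‖}) := by
  obtain ⟨a, b, rfl⟩ := exists_linear hG
  obtain ⟨c, e, rfl⟩ := exists_linear hH
  simpa only [ev_lin] using local_bound_split a b c e (det_ne_zero hsq)

end LocalForms

section Regions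

/-- The coordinates of the points of the dilate `r • D` are `O(r)`. -/
lemma norm_le_of_mem_smul {K : Type*} [Field K] (B : BoxData K) {r : ℝ} (hr : 0 ≤ r) {p : KInfty K × KInfty K}
    (hp : p ∈ r • B.D) :
    (∀ w, ‖p.1.1 w‖ ≤ r * (|(B.ctrR w).1| + |(B.ctrR w).2| + B.radR w) ∧
      ‖p.2.1 w‖ ≤ r * (|(B.ctrR w).1| + |(B.ctrR w).2| + B.radR w)) ∧
    (∀ w, ‖p.1.2 w‖ ≤ r * (‖(B.ctrC w).1‖ + ‖(B.ctrC w).2‖ + B.radC w) ∧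
      ‖p.2.2 w‖ ≤ r * (‖(B.ctrC w).1‖ + ‖(B.ctrC w).2‖ + B.radC w)) := by
  obtain ⟨x, hx, rfl⟩ := mem_smul_set.mp hp
  refine ⟨fun w => ?_, fun w => ?_⟩
  · have h := hx.1 w
    have h1 : |x.1.1 w - (B.ctrR w).1| ≤ B.radR w :=
      (Real.abs_le_sqrt (le_add_of_nonneg_right (sq_nonneg _))).trans h
    have h2 : |x.2.1 w - (B.ctrR w).2| ≤ B.radR w :=
      (Real.abs_le_sqrt (le_add_of_nonneg_left (sq_nonneg _))).trans h
    have e1 := abs_sub_abs_le_abs_sub (x.1.1 w) (B.ctrR w).1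
    have e2 := abs_sub_abs_le_abs_sub (x.2.1 w) (B.ctrR w).2
    have n1 := abs_nonneg (B.ctrR w).1
    have n2 := abs_nonneg (B.ctrR w).2
    constructor
    · change ‖r * x.1.1 w‖ ≤ _
      rw [norm_mul, Real.norm_of_nonneg hr, Real.norm_eq_abs]
      exact mul_le_mul_of_nonneg_left (by linarith) hr
    · change ‖r * x.2.1 w‖ ≤ _
      rw [norm_mul, Real.norm_of_nonneg hr, Real.norm_eq_abs]
      exact mul_le_mul_of_nonneg_left (by linarith) hr
  · have h := hx.2 w
    have h1 : ‖x.1.2 w - (B.ctrC w).1‖ ≤ B.radC w :=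
      (le_abs_self _).trans
        ((Real.abs_le_sqrt (le_add_of_nonneg_right (sq_nonneg _))).trans h)
    have h2 : ‖x.2.2 w - (B.ctrC w).2‖ ≤ B.radC w :=
      (le_abs_self _).trans
        ((Real.abs_le_sqrt (le_add_of_nonneg_left (sq_nonneg _))).trans h)
    have e1 := norm_sub_norm_le (x.1.2 w) (B.ctrC w).1
    have e2 := norm_sub_norm_le (x.2.2 w) (B.ctrC w).2
    have n1 := norm_nonneg (B.ctrC w).1
    have n2 := norm_nonneg (B.ctrC w).2
    constructor
    · change ‖r • x.1.2 w‖ ≤ _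
      rw [norm_smul, Real.norm_of_nonneg hr]
      exact mul_le_mul_of_nonneg_left (by linarith) hr
    · change ‖r • x.2.2 w‖ ≤ _
      rw [norm_smul, Real.norm_of_nonneg hr]
      exact mul_le_mul_of_nonneg_left (by linarith) hr

variable {K : Type*} [Field K] [NumberField K]

lemma normInfty_eq (f : MvPolynomial (Fin 2) (𝓞 K)) (p : KInfty K × KInfty K) :
    normInfty K (evalAtPlaces K f p.1 p.2) =
      (∏ w : {w : InfinitePlace K // w.IsReal}, ‖ev (f.map (realEmbed K w)) (p.1.1 w, p.2.1 w)‖ ^ Module.finrank ℝ ℝ) *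
        ∏ w : {w : InfinitePlace K // w.IsComplex}, ‖ev (f.map (complexEmbed K w)) (p.1.2 w, p.2.2 w)‖ ^ Module.finrank ℝ ℂ := by
  simp only [Module.finrank_self, Complex.finrank_real_complex, pow_one]
  rfl

lemma card_places : Fintype.card {w : InfinitePlace K // w.IsReal} + Fintype.card {w : InfinitePlace K // w.IsComplex} = Fintype.card (InfinitePlace K) :=
  (card_eq_nrRealPlaces_add_nrComplexPlaces K).symm

/-- The region `R_i(X; Z₁, Z₂)` of the form `f = F_i`. -/
def region (f : MvPolynomial (Fin 2) (𝓞 K)) (B : BoxData K)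
    (Hr : {w : InfinitePlace K // w.IsReal} → Finset (MvPolynomial (Fin 2) ℝ)) (Hc : {w : InfinitePlace K // w.IsComplex} → Finset (MvPolynomial (Fin 2) ℂ))
    (X Z₁ Z₂ : ℝ) : Set (KInfty K × KInfty K) :=
  {p | p ∈ (X ^ ((1 : ℝ) / (Module.finrank ℚ K))) • B.D ∧
    (∀ w, ∀ H ∈ Hr w, 1 ≤ |MvPolynomial.eval ![p.1.1 w, p.2.1 w] H|) ∧
    (∀ w, ∀ H ∈ Hc w, 1 ≤ ‖MvPolynomial.eval ![p.1.2 w, p.2.2 w] H‖) ∧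
    Z₁ ≤ normInfty K (evalAtPlaces K f p.1 p.2) ∧
    normInfty K (evalAtPlaces K f p.1 p.2) < Z₂}

/-- Degree one: each place contributes a volume of order `|X^{1/m}|^{m_w}` for the variable
complementing `F_i`, and `∏_w (X^{1/m})^{m_w} = X`. -/
lemma bound_linear {f : MvPolynomial (Fin 2) (𝓞 K)} {d : ℕ} (hf : f.IsHomogeneous d)
    (B : BoxData K)
    {Hr : {w : InfinitePlace K // w.IsReal} → Finset (MvPolynomial (Fin 2) ℝ)} {Hc : {w : InfinitePlace K // w.IsComplex} → Finset (MvPolynomial (Fin 2) ℂ)}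
    (hfr : ∀ w, f.map (realEmbed K w) ∈ Hr w) (hfc : ∀ w, f.map (complexEmbed K w) ∈ Hc w)
    (hsr : ∀ w, Squarefree (f.map (realEmbed K w)))
    (hsc : ∀ w, Squarefree (f.map (complexEmbed K w)))
    (hd : d = 1) : ∃ C : ℝ≥0, ∀ X Z₁ Z₂ : ℝ, 1 ≤ X → Z₁ ≤ Z₂ →
    (volume (region f B Hr Hc X Z₁ Z₂)).toReal ≤
      C * (X * (hypVol (Fintype.card (InfinitePlace K)) Z₂ -
        hypVol (Fintype.card (InfinitePlace K)) Z₁)) := by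
  subst hd
  choose κR hκR using fun w : {w : InfinitePlace K // w.IsReal} => local_linear (hf.map (realEmbed K w)) (hsr w)
    (|(B.ctrR w).1| + |(B.ctrR w).2| + B.radR w)
  choose κC hκC using fun w : {w : InfinitePlace K // w.IsComplex} => local_linear (hf.map (complexEmbed K w)) (hsc w)
    (‖(B.ctrC w).1‖ + ‖(B.ctrC w).2‖ + B.radC w)
  refine ⟨(∏ w, κR w) * ∏ w, κC w, fun X Z₁ Z₂ hX hZ => ?_⟩
  have hX0 : 0 ≤ X := zero_le_one.trans hX
  set r : ℝ≥0 := ⟨X ^ ((1 : ℝ) / (Module.finrank ℚ K)), by positivity⟩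
  have hrX : (r : ℝ) ^ Module.finrank ℚ K = X := by
    change (X ^ ((1 : ℝ) / (Module.finrank ℚ K))) ^ Module.finrank ℚ K = X
    rw [one_div, Real.rpow_inv_natCast_pow hX0 Module.finrank_pos.ne']
  have key := toReal_le_of_dirac (card_places (K := K)) _ _
    (fun w p => ‖ev (f.map (realEmbed K w)) p‖ ^ Module.finrank ℝ ℝ)
    (fun w p => ‖ev (f.map (complexEmbed K w)) p‖ ^ Module.finrank ℝ ℂ)
    (fun w => (measurable_ev _).norm.pow_const _) (fun w => (measurable_ev _).norm.pow_const _)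
    _ _ (fun w => hκR w r) (fun w => hκC w r) hZ (region f B Hr Hc X Z₁ Z₂)
    (fun p hp w => ⟨hp.2.1 w _ (hfr w), (norm_le_of_mem_smul B r.2 hp.1).1 w⟩)
    (fun p hp w => ⟨hp.2.2.1 w _ (hfc w), (norm_le_of_mem_smul B r.2 hp.1).2 w⟩)
    (fun p hp => by rw [← normInfty_eq]; exact hp.2.2.2)
  refine key.trans (le_of_eq ?_)
  rw [← mul_assoc]
  congr 1
  rw [← hrX, ← card_add_two_mul_card_eq_rank K, pow_add, pow_mul]
  push_cast
  simp only [Finset.prod_mul_distrib, Finset.prod_const, Finset.card_univ, Module.finrank_self,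
    Complex.finrank_real_complex, pow_one]
  rw [nrRealPlaces, nrComplexPlaces]
  ring

/-- Degree at least three: the condition `Z₁ ≤ 𝔑(F) < Z₂` is raised to the power `2/d`, in
accordance with the local coordinate `|F|^{2 m_w / d}`. The box plays no role. -/
lemma bound_ge_three {f : MvPolynomial (Fin 2) (𝓞 K)} {d : ℕ} (hf : f.IsHomogeneous d)
    (B : BoxData K)
    {Hr : {w : InfinitePlace K // w.IsReal} → Finset (MvPolynomial (Fin 2) ℝ)} {Hc : {w : InfinitePlace K // w.IsComplex} → Finset (MvPolynomial (Fin 2) ℂ)}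
    (hfr : ∀ w, f.map (realEmbed K w) ∈ Hr w) (hfc : ∀ w, f.map (complexEmbed K w) ∈ Hc w)
    (hsr : ∀ w, Squarefree (f.map (realEmbed K w)))
    (hsc : ∀ w, Squarefree (f.map (complexEmbed K w)))
    (hd : 3 ≤ d) : ∃ C : ℝ≥0, ∀ X Z₁ Z₂ : ℝ, 0 ≤ Z₁ → Z₁ ≤ Z₂ →
    (volume (region f B Hr Hc X Z₁ Z₂)).toReal ≤
      C * (hypVol (Fintype.card (InfinitePlace K)) (Z₂ ^ (2 / (d : ℝ))) -
        hypVol (Fintype.card (InfinitePlace K)) (Z₁ ^ (2 / (d : ℝ)))) := by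
  have hd0 : 0 < d := by omega
  have hd' : (0 : ℝ) < 2 / (d : ℝ) := by positivity
  choose κR hκR using fun w : {w : InfinitePlace K // w.IsReal} => local_bound_hom hd0 _ (hf.map (realEmbed K w))
    (finite_sublevel hd (hf.map (realEmbed K w)) (hsr w))
  choose κC hκC using fun w : {w : InfinitePlace K // w.IsComplex} => local_bound_hom hd0 _ (hf.map (complexEmbed K w))
    (finite_sublevel hd (hf.map (complexEmbed K w)) (hsc w))
  refine ⟨(∏ w, κR w) * ∏ w, κC w, fun X Z₁ Z₂ hZ₁ hZ => ?_⟩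
  refine toReal_le_of_dirac (card_places (K := K)) _ _
    (fun w p => (‖ev (f.map (realEmbed K w)) p‖ ^ Module.finrank ℝ ℝ) ^ (2 / (d : ℝ)))
    (fun w p => (‖ev (f.map (complexEmbed K w)) p‖ ^ Module.finrank ℝ ℂ) ^ (2 / (d : ℝ)))
    (fun w => ((measurable_ev _).norm.pow_const _).pow_const _)
    (fun w => ((measurable_ev _).norm.pow_const _).pow_const _)
    _ _ hκR hκC (Real.rpow_le_rpow hZ₁ hZ hd'.le) (region f B Hr Hc X Z₁ Z₂)
    (fun p hp w => hp.2.1 w _ (hfr w)) (fun p hp w => hp.2.2.1 w _ (hfc w)) (fun p hp => ?_)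
  have h1 := hp.2.2.2
  rw [normInfty_eq] at h1
  rw [Real.finsetProd_rpow _ _ fun w _ => by positivity,
    Real.finsetProd_rpow _ _ fun w _ => by positivity, ← Real.mul_rpow (by positivity) (by positivity)]
  exact ⟨Real.rpow_le_rpow hZ₁ h1.1 hd'.le, Real.rpow_lt_rpow (by positivity) h1.2 hd'⟩

/-- Degree two: the places where `F_i` stays irreducible use the coordinate `|F|^{m_w}`, the other
places use `|G|^{m_w}` together with the integration variable `t_w = H`. -/
lemma bound_quadratic {f : MvPolynomial (Fin 2) (𝓞 K)} {d : ℕ} (hf : f.IsHomogeneous d)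
    (B : BoxData K)
    {Hr : {w : InfinitePlace K // w.IsReal} → Finset (MvPolynomial (Fin 2) ℝ)} {Hc : {w : InfinitePlace K // w.IsComplex} → Finset (MvPolynomial (Fin 2) ℂ)}
    (hfr : ∀ w, f.map (realEmbed K w) ∈ Hr w)
    (hsr : ∀ w, Squarefree (f.map (realEmbed K w)))
    (hsc : ∀ w, Squarefree (f.map (complexEmbed K w)))
    (hd : d = 2)
    (hr2 : ∀ w, ¬ Irreducible (f.map (realEmbed K w)) →
      ∃ G H' : MvPolynomial (Fin 2) ℝ, G ∈ Hr w ∧ H' ∈ Hr w ∧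
        G.IsHomogeneous 1 ∧ H'.IsHomogeneous 1 ∧ G * H' = f.map (realEmbed K w))
    (hc2 : ∀ w, ∃ G H' : MvPolynomial (Fin 2) ℂ, G ∈ Hc w ∧ H' ∈ Hc w ∧
        G.IsHomogeneous 1 ∧ H'.IsHomogeneous 1 ∧ G * H' = f.map (complexEmbed K w)) :
    ∃ C : ℝ≥0, ∀ X Z₁ Z₂ : ℝ, 0 ≤ Z₁ → Z₁ ≤ Z₂ →
    (volume (region f B Hr Hc X Z₁ Z₂)).toReal ≤
      C * ∫ t in {t : ({w : {w : InfinitePlace K // w.IsReal} // ¬ Irreducible (f.map (realEmbed K w))} → ℝ) × ({w : InfinitePlace K // w.IsComplex} → ℂ) |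
          (∀ w, 1 ≤ |t.1 w|) ∧ ∀ w, 1 ≤ ‖t.2 w‖},
        (hypVol (Fintype.card (InfinitePlace K)) (Z₂ * (tnorm t)⁻¹) -
          hypVol (Fintype.card (InfinitePlace K)) (Z₁ * (tnorm t)⁻¹)) := by
  subst hd
  have hreal : ∀ w : {w : InfinitePlace K // w.IsReal}, ∃ (A : Set (ℝ × ℝ)) (g : ℝ × ℝ → ℝ × ℝ) (κ : ℝ≥0), Measurable g ∧
      (volume.restrict A).map g ≤ κ • (volume.restrict (Ici (1 : ℝ))).prod
        (mixedMeasure (fun w : {w : InfinitePlace K // w.IsReal} => Irreducible (f.map (realEmbed K w))) w) ∧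
      (∀ p : ℝ × ℝ, (∀ H ∈ Hr w, 1 ≤ |MvPolynomial.eval ![p.1, p.2] H|) → p ∈ A) ∧
      ∀ p, (g p).1 * |(g p).2| = ‖ev (f.map (realEmbed K w)) p‖ ^ Module.finrank ℝ ℝ := by
    intro w
    by_cases h : Irreducible (f.map (realEmbed K w))
    · obtain ⟨κ, hκ⟩ := local_bound_hom two_pos _ (hf.map (realEmbed K w))
        (finite_sublevel_of_irreducible (hf.map (realEmbed K w)) h)
      refine ⟨{p | 1 ≤ ‖ev (f.map (realEmbed K w)) p‖},
        fun p => ((‖ev (f.map (realEmbed K w)) p‖ ^ Module.finrank ℝ ℝ) ^ (2 / ((2 : ℕ) : ℝ)), 1),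
        κ, (((measurable_ev _).norm.pow_const _).pow_const _).prodMk measurable_const, ?_,
        fun p hp => hp _ (hfr w), fun p => ?_⟩
      · rw [mixedMeasure, if_pos h]; exact hκ
      · simp
    · obtain ⟨G, H, hG, hH, hG1, hH1, hGH⟩ := hr2 w h
      obtain ⟨κ, hκ⟩ := local_split hG1 hH1 (hGH ▸ hsr w)
      refine ⟨{p | 1 ≤ ‖ev G p‖ ∧ 1 ≤ ‖ev H p‖}, fun p => (‖ev G p‖ ^ Module.finrank ℝ ℝ, ev H p),
        κ, ((measurable_ev _).norm.pow_const _).prodMk (measurable_ev _), ?_,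
        fun p hp => ⟨hp _ hG, hp _ hH⟩, fun p => ?_⟩
      · rw [mixedMeasure, if_neg h]; exact hκ
      · simp [← hGH, ev]
  have hcomplex : ∀ w : {w : InfinitePlace K // w.IsComplex}, ∃ (A : Set (ℂ × ℂ)) (g : ℂ × ℂ → ℝ × ℂ) (κ : ℝ≥0), Measurable g ∧
      (volume.restrict A).map g ≤ κ • (volume.restrict (Ici (1 : ℝ))).prod
        (volume.restrict {t | 1 ≤ ‖t‖}) ∧
      (∀ p : ℂ × ℂ, (∀ H ∈ Hc w, 1 ≤ ‖MvPolynomial.eval ![p.1, p.2] H‖) → p ∈ A) ∧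
      ∀ p, (g p).1 * ‖(g p).2‖ ^ 2 = ‖ev (f.map (complexEmbed K w)) p‖ ^ Module.finrank ℝ ℂ := by
    intro w
    obtain ⟨G, H, hG, hH, hG1, hH1, hGH⟩ := hc2 w
    obtain ⟨κ, hκ⟩ := local_split hG1 hH1 (hGH ▸ hsc w)
    refine ⟨{p | 1 ≤ ‖ev G p‖ ∧ 1 ≤ ‖ev H p‖}, fun p => (‖ev G p‖ ^ Module.finrank ℝ ℂ, ev H p),
      κ, ((measurable_ev _).norm.pow_const _).prodMk (measurable_ev _), hκ,
      fun p hp => ⟨hp _ hG, hp _ hH⟩, fun p => ?_⟩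
    simp [← hGH, ev, mul_pow]
  choose AR gR κR hgR hκR hAR hR using hreal
  choose AC gC κC hgC hκC hAC hC using hcomplex
  refine ⟨(∏ w, κR w) * ∏ w, κC w, fun X Z₁ Z₂ hZ₁ hZ => ?_⟩
  refine toReal_le_of_mixed (card_places (K := K))
    (fun w : {w : InfinitePlace K // w.IsReal} => Irreducible (f.map (realEmbed K w))) AR AC gR gC hgR hgC κR κC hκR hκC hZ₁ hZ
    (region f B Hr Hc X Z₁ Z₂) (fun p hp w => hAR w _ (hp.2.1 w))
    (fun p hp w => hAC w _ (hp.2.2.1 w)) (fun p hp => ?_)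
  have h1 := hp.2.2.2
  rw [normInfty_eq] at h1
  have h2 : ((∏ w, (gR w (p.1.1 w, p.2.1 w)).1) * ∏ w, (gC w (p.1.2 w, p.2.2 w)).1) *
        tnorm (fun w => (gR w (p.1.1 w, p.2.1 w)).2, fun w => (gC w (p.1.2 w, p.2.2 w)).2) =
      (∏ w : {w : InfinitePlace K // w.IsReal}, ‖ev (f.map (realEmbed K w)) (p.1.1 w, p.2.1 w)‖ ^ Module.finrank ℝ ℝ) *
        ∏ w : {w : InfinitePlace K // w.IsComplex}, ‖ev (f.map (complexEmbed K w)) (p.1.2 w, p.2.2 w)‖ ^ Module.finrank ℝ ℂ := by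
    simp only [← hR, ← hC, Finset.prod_mul_distrib, tnorm]
    ring
  rw [h2]
  exact h1

end Regions
end VolR

/-! ### Combining the three cases -/

open VolR
open scoped NNReal

/-- **Lemma 4.9 (volumes of the regions `R_i(X;Z_1,Z_2)`).** Let `q = |Ω_∞|` and
`1 ≤ Z_1 ≤ Z_2`, `X ≥ 1`. Then `vol R_i(X;Z_1,Z_2) ≪ X (I_q(Z_2) − I_q(Z_1))` if
`d_i = 1`; `vol R_i(X;Z_1,Z_2) ≪ I_q(Z_2^{2/d_i}) − I_q(Z_1^{2/d_i})` if `d_i ≥ 3`; and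
if `d_i = 2`, with `Ω′` the real places where `F_i` stays irreducible and
`Ω″ = Ω_∞ ∖ Ω′`, `vol R_i(X;Z_1,Z_2)` is bounded by the integral over tuples
`(t_w)_{w ∈ Ω″}`, `|t_w|_w ≥ 1`, of
`I_q(Z_2 ∏_{w ∈ Ω″} |t_w|_w^{−m_w}) − I_q(Z_1 ∏_{w ∈ Ω″} |t_w|_w^{−m_w})`. -/
theorem volume_of_R_regions
    (K : Type*) [Field K] [NumberField K]
    (n : ℕ) (F : Fin n → MvPolynomial (Fin 2) (𝓞 K)) (dF : Fin n → ℕ)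
    (hhom : ∀ i, (F i).IsHomogeneous (dF i))
    (hpos : ∀ i, 0 < dF i)
    (hirr : ∀ i, Irreducible ((F i).map (algebraMap (𝓞 K) K)))
    (B : BoxData K)
    (Hr : {w : InfinitePlace K // w.IsReal} → Finset (MvPolynomial (Fin 2) ℝ))
    (Hc : {w : InfinitePlace K // w.IsComplex} → Finset (MvPolynomial (Fin 2) ℂ))
    (hHr0 : ∀ w, MvPolynomial.X 0 ∈ Hr w ∧ MvPolynomial.X 1 ∈ Hr w)
    (hHc0 : ∀ w, MvPolynomial.X 0 ∈ Hc w ∧ MvPolynomial.X 1 ∈ Hc w)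
    (hHrF : ∀ w, ∀ j, (F j).map (realEmbed K w) ∈ Hr w)
    (hHcF : ∀ w, ∀ j, (F j).map (complexEmbed K w) ∈ Hc w)
    (hHr2 : ∀ w, ∀ j, dF j = 2 → ¬ Irreducible ((F j).map (realEmbed K w)) →
      ∃ G H' : MvPolynomial (Fin 2) ℝ, G ∈ Hr w ∧ H' ∈ Hr w ∧
        G.IsHomogeneous 1 ∧ H'.IsHomogeneous 1 ∧ G * H' = (F j).map (realEmbed K w))
    (hHc2 : ∀ w, ∀ j, dF j = 2 →
      ∃ G H' : MvPolynomial (Fin 2) ℂ, G ∈ Hc w ∧ H' ∈ Hc w ∧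
        G.IsHomogeneous 1 ∧ H'.IsHomogeneous 1 ∧ G * H' = (F j).map (complexEmbed K w))
    (hHhomog : (∀ w, ∀ H ∈ Hr w, ∃ e : ℕ, 1 ≤ e ∧ H.IsHomogeneous e ∧ Squarefree H) ∧
      (∀ w, ∀ H ∈ Hc w, ∃ e : ℕ, 1 ≤ e ∧ H.IsHomogeneous e ∧ Squarefree H))
    (i : Fin n) :
    ∃ C : ℝ, 0 < C ∧ ∀ X Z₁ Z₂ : ℝ, 1 ≤ X → 1 ≤ Z₁ → Z₁ ≤ Z₂ →
      (dF i = 1 →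
        (volume {p : KInfty K × KInfty K |
            p ∈ (X ^ ((1 : ℝ) / (Module.finrank ℚ K))) • B.D ∧
            (∀ w, ∀ H ∈ Hr w, 1 ≤ |MvPolynomial.eval ![p.1.1 w, p.2.1 w] H|) ∧
            (∀ w, ∀ H ∈ Hc w, 1 ≤ ‖MvPolynomial.eval ![p.1.2 w, p.2.2 w] H‖) ∧
            Z₁ ≤ normInfty K (evalAtPlaces K (F i) p.1 p.2) ∧
            normInfty K (evalAtPlaces K (F i) p.1 p.2) < Z₂}).toReal
          ≤ C * (X * (hypVol (Fintype.card (InfinitePlace K)) Z₂ -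
              hypVol (Fintype.card (InfinitePlace K)) Z₁))) ∧
      (3 ≤ dF i →
        (volume {p : KInfty K × KInfty K |
            p ∈ (X ^ ((1 : ℝ) / (Module.finrank ℚ K))) • B.D ∧
            (∀ w, ∀ H ∈ Hr w, 1 ≤ |MvPolynomial.eval ![p.1.1 w, p.2.1 w] H|) ∧
            (∀ w, ∀ H ∈ Hc w, 1 ≤ ‖MvPolynomial.eval ![p.1.2 w, p.2.2 w] H‖) ∧
            Z₁ ≤ normInfty K (evalAtPlaces K (F i) p.1 p.2) ∧
            normInfty K (evalAtPlaces K (F i) p.1 p.2) < Z₂}).toReal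
          ≤ C * (hypVol (Fintype.card (InfinitePlace K)) (Z₂ ^ (2 / (dF i : ℝ))) -
              hypVol (Fintype.card (InfinitePlace K)) (Z₁ ^ (2 / (dF i : ℝ))))) ∧
      (dF i = 2 →
        (volume {p : KInfty K × KInfty K |
            p ∈ (X ^ ((1 : ℝ) / (Module.finrank ℚ K))) • B.D ∧
            (∀ w, ∀ H ∈ Hr w, 1 ≤ |MvPolynomial.eval ![p.1.1 w, p.2.1 w] H|) ∧
            (∀ w, ∀ H ∈ Hc w, 1 ≤ ‖MvPolynomial.eval ![p.1.2 w, p.2.2 w] H‖) ∧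
            Z₁ ≤ normInfty K (evalAtPlaces K (F i) p.1 p.2) ∧
            normInfty K (evalAtPlaces K (F i) p.1 p.2) < Z₂}).toReal
          ≤ C * ∫ t in {t : ({w : {w : InfinitePlace K // w.IsReal} //
                  ¬ Irreducible ((F i).map (realEmbed K w))} → ℝ) ×
                ({w : InfinitePlace K // w.IsComplex} → ℂ) |
                (∀ w, 1 ≤ |t.1 w|) ∧ (∀ w, 1 ≤ ‖t.2 w‖)},
              (hypVol (Fintype.card (InfinitePlace K))
                  (Z₂ * ((∏ w, |t.1 w|) * ∏ w, ‖t.2 w‖ ^ 2)⁻¹) -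
                hypVol (Fintype.card (InfinitePlace K))
                  (Z₁ * ((∏ w, |t.1 w|) * ∏ w, ‖t.2 w‖ ^ 2)⁻¹))) := by
  have hsr : ∀ w, Squarefree ((F i).map (realEmbed K w)) := fun w =>
    (hHhomog.1 w _ (hHrF w i)).elim fun _ h => h.2.2
  have hsc : ∀ w, Squarefree ((F i).map (complexEmbed K w)) := fun w =>
    (hHhomog.2 w _ (hHcF w i)).elim fun _ h => h.2.2
  obtain ⟨C₁, h₁⟩ : ∃ C : ℝ≥0, dF i = 1 → ∀ X Z₁ Z₂ : ℝ, 1 ≤ X → Z₁ ≤ Z₂ →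
      (volume (region (F i) B Hr Hc X Z₁ Z₂)).toReal ≤
        C * (X * (hypVol (Fintype.card (InfinitePlace K)) Z₂ -
          hypVol (Fintype.card (InfinitePlace K)) Z₁)) := by
    by_cases hd : dF i = 1
    · obtain ⟨C, hC⟩ := bound_linear (hhom i) B (hHrF · i) (hHcF · i) hsr hsc hd
      exact ⟨C, fun _ => hC⟩
    · exact ⟨0, fun h => absurd h hd⟩
  obtain ⟨C₂, h₂⟩ : ∃ C : ℝ≥0, 3 ≤ dF i → ∀ X Z₁ Z₂ : ℝ, 0 ≤ Z₁ → Z₁ ≤ Z₂ →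
      (volume (region (F i) B Hr Hc X Z₁ Z₂)).toReal ≤
        C * (hypVol (Fintype.card (InfinitePlace K)) (Z₂ ^ (2 / (dF i : ℝ))) -
          hypVol (Fintype.card (InfinitePlace K)) (Z₁ ^ (2 / (dF i : ℝ)))) := by
    by_cases hd : 3 ≤ dF i
    · obtain ⟨C, hC⟩ := bound_ge_three (hhom i) B (hHrF · i) (hHcF · i) hsr hsc hd
      exact ⟨C, fun _ => hC⟩
    · exact ⟨0, fun h => absurd h hd⟩
  obtain ⟨C₃, h₃⟩ : ∃ C : ℝ≥0, dF i = 2 → ∀ X Z₁ Z₂ : ℝ, 0 ≤ Z₁ → Z₁ ≤ Z₂ →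
      (volume (region (F i) B Hr Hc X Z₁ Z₂)).toReal ≤
        C * ∫ t in {t : ({w : {w : InfinitePlace K // w.IsReal} //
              ¬ Irreducible ((F i).map (realEmbed K w))} → ℝ) ×
            ({w : InfinitePlace K // w.IsComplex} → ℂ) |
            (∀ w, 1 ≤ |t.1 w|) ∧ ∀ w, 1 ≤ ‖t.2 w‖},
          (hypVol (Fintype.card (InfinitePlace K)) (Z₂ * (tnorm t)⁻¹) -
            hypVol (Fintype.card (InfinitePlace K)) (Z₁ * (tnorm t)⁻¹)) := by
    by_cases hd : dF i = 2
    · obtain ⟨C, hC⟩ := bound_quadratic (hhom i) B (hHrF · i) hsr hsc hd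
        (fun w => hHr2 w i hd) (fun w => hHc2 w i hd)
      exact ⟨C, fun _ => hC⟩
    · exact ⟨0, fun h => absurd h hd⟩
  -- All three right-hand sides are nonnegative, so one constant serves in all three cases.
  refine ⟨C₁ + C₂ + C₃ + 1, by positivity, fun X Z₁ Z₂ hX hZ₁ hZ => ?_⟩
  have hZ₁' : 0 ≤ Z₁ := zero_le_one.trans hZ₁
  have c₁ : (0 : ℝ) ≤ C₁ := C₁.2
  have c₂ : (0 : ℝ) ≤ C₂ := C₂.2
  have c₃ : (0 : ℝ) ≤ C₃ := C₃.2
  refine ⟨fun hd => (h₁ hd X Z₁ Z₂ hX hZ).trans (mul_le_mul_of_nonneg_right (by linarith) ?_),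
    fun hd => (h₂ hd X Z₁ Z₂ hZ₁' hZ).trans (mul_le_mul_of_nonneg_right (by linarith) ?_),
    fun hd => (h₃ hd X Z₁ Z₂ hZ₁' hZ).trans (mul_le_mul_of_nonneg_right (by linarith) ?_)⟩
  · exact mul_nonneg (zero_le_one.trans hX) (sub_nonneg.mpr (hypVol_mono _ hZ))
  · exact sub_nonneg.mpr
      (hypVol_mono _ (Real.rpow_le_rpow hZ₁' hZ (by positivity)))
  · refine setIntegral_nonneg measurableSet_one_le fun t ht => sub_nonneg.mpr (hypVol_mono _ ?_)
    exact mul_le_mul_of_nonneg_right hZ (inv_nonneg.mpr (zero_le_one.trans (one_le_tnorm ht)))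
end
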